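/- arXiv:1211.3442 — 3 statements merged into one kernel-verified Lean document; each statement's English description precedes it below -/
import Mathlib

section
/- For every positive integer n and every Ferrers board F in F_n, the number of 321-avoiding perfect matchings of shape F equals the number of Dyck paths of semilength n that lie weakly below the border path D_F of F. (In the paper this is realized by an explicit bijection Δ_321 : M_F(321) → D²_F.) -/
/-! ### Patterns of length 3 and 4 as permutations (0-indexed values) -/

def p123 : Equiv.Perm (Fin 3) :=
  ⟨![0,1,2], ![0,1,2], by intro x; fin_cases x <;> rfl, by intro x; fin_cases x <;> rfl⟩
def p132 : Equiv.Perm (Fin 3) :=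
  ⟨![0,2,1], ![0,2,1], by intro x; fin_cases x <;> rfl, by intro x; fin_cases x <;> rfl⟩
def p213 : Equiv.Perm (Fin 3) :=
  ⟨![1,0,2], ![1,0,2], by intro x; fin_cases x <;> rfl, by intro x; fin_cases x <;> rfl⟩
def p231 : Equiv.Perm (Fin 3) :=
  ⟨![1,2,0], ![2,0,1], by intro x; fin_cases x <;> rfl, by intro x; fin_cases x <;> rfl⟩
def p312 : Equiv.Perm (Fin 3) :=
  ⟨![2,0,1], ![1,2,0], by intro x; fin_cases x <;> rfl, by intro x; fin_cases x <;> rfl⟩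
def p321 : Equiv.Perm (Fin 3) :=
  ⟨![2,1,0], ![2,1,0], by intro x; fin_cases x <;> rfl, by intro x; fin_cases x <;> rfl⟩
def p1342 : Equiv.Perm (Fin 4) :=
  ⟨![0,2,3,1], ![0,3,1,2], by intro x; fin_cases x <;> rfl, by intro x; fin_cases x <;> rfl⟩
def p1324 : Equiv.Perm (Fin 4) :=
  ⟨![0,2,1,3], ![0,2,1,3], by intro x; fin_cases x <;> rfl, by intro x; fin_cases x <;> rfl⟩

/-! ### Perfect matchings of `[2n] = {1, …, 2n}` as finsets of pairs `(i,j)`, `i < j` -/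

/-- `M` is a perfect matching of `{1, …, 2n}`. -/
def IsPerfectMatching (n : ℕ) (M : Finset (ℕ × ℕ)) : Prop :=
  (∀ p ∈ M, p.1 < p.2 ∧ 1 ≤ p.1 ∧ p.2 ≤ 2 * n) ∧
  ∀ x, 1 ≤ x → x ≤ 2 * n → ∃! p, p ∈ M ∧ (p.1 = x ∨ p.2 = x)

/-- The matching `M` contains the pattern `τ ∈ S_k`: there are
`i_1 < i_2 < ⋯ < i_{2k}` with `(i_a, i_{2k+1-τ(a)}) ∈ M` for all `1 ≤ a ≤ k`
(written here 0-indexed). -/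
def MatchContains {k : ℕ} (τ : Equiv.Perm (Fin k)) (M : Finset (ℕ × ℕ)) : Prop :=
  ∃ f : Fin (2 * k) → ℕ, StrictMono f ∧
    ∀ a : Fin k,
      (f ⟨a.1, by have := a.isLt; omega⟩,
       f ⟨2 * k - 1 - (τ a).1, by have := (τ a).isLt; omega⟩) ∈ M

def MatchAvoids {k : ℕ} (τ : Equiv.Perm (Fin k)) (M : Finset (ℕ × ℕ)) : Prop :=
  ¬ MatchContains τ M

/-! ### Dyck paths as lists of booleans (`true` = east step, `false` = south step) -/

/-- A Dyck path of semilength `n`, from `(0,n)` to `(n,0)`, staying weakly above `y = n - x`. -/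
def IsDyckPath (n : ℕ) (t : List Bool) : Prop :=
  t.length = 2 * n ∧ t.count true = n ∧
  ∀ i, (t.take i).count false ≤ (t.take i).count true

/-- The height (distance above the diagonal) of the `i`-th vertex of the path `t`. -/
def pathHeight (t : List Bool) (i : ℕ) : ℤ :=
  ((t.take i).count true : ℤ) - ((t.take i).count false : ℤ)

/-- `s` lies weakly below `t` (for paths of the same semilength). -/
def WeaklyBelow (s t : List Bool) : Prop := ∀ i, pathHeight s i ≤ pathHeight t i

/-- The shape of a matching of `[2n]`: an east step for each opener, a south step for
each closer. -/
def shapeOf (n : ℕ) (M : Finset (ℕ × ℕ)) : List Bool :=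
  (List.range (2 * n)).map fun x => decide ((x + 1) ∈ M.image Prod.fst)

/-- Number of returns of a path: south steps ending on the diagonal. -/
def returnsOf (t : List Bool) : ℕ :=
  ((Finset.range t.length).filter fun i =>
    t[i]? = some false ∧ (t.take (i+1)).count true = (t.take (i+1)).count false).card

/-- Height sequence of a path, as natural numbers. -/
def hseq (t : List Bool) (i : ℕ) : ℕ := (t.take i).count true - (t.take i).count false

/-- `η(F)`: the number of indices `0 ≤ i ≤ 2n` with `h_i = 2`. -/
def etaOf (n : ℕ) (t : List Bool) : ℕ :=
  ((Finset.range (2 * n + 1)).filter fun i => hseq t i = 2).card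

/-! ### Full rook placements on Ferrers boards -/

/-- The square in column `c`, row `r` (both 1-indexed from the bottom left) belongs to the
Ferrers board with border path `t ∈ F_n`. -/
def InBoard (n : ℕ) (t : List Bool) (c r : ℕ) : Prop :=
  1 ≤ c ∧ 1 ≤ r ∧ ∃ i, c ≤ (t.take i).count true ∧ (t.take i).count false + r ≤ n

/-- `R` is a full rook placement on the Ferrers board with border path `t ∈ F_n`:
one rook in each of the `n` rows and `n` columns. -/
def IsFullRookPlacement (n : ℕ) (t : List Bool) (R : Finset (ℕ × ℕ)) : Prop :=
  (∀ p ∈ R, InBoard n t p.1 p.2) ∧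
  (∀ c, 1 ≤ c → c ≤ n → ∃! p, p ∈ R ∧ p.1 = c) ∧
  (∀ r, 1 ≤ r → r ≤ n → ∃! p, p ∈ R ∧ p.2 = r)

/-- The rooks of `R` lying in the rectangle `Γ(V_i)` determined by the `i`-th border vertex. -/
def rectRooks (n : ℕ) (t : List Bool) (R : Finset (ℕ × ℕ)) (i : ℕ) : Finset (ℕ × ℕ) :=
  R.filter fun p => p.1 ≤ (t.take i).count true ∧ p.2 + (t.take i).count false ≤ n

/-- Length of the longest increasing sequence (in both coordinates) in a finite point set. -/
def lisLen (S : Finset (ℕ × ℕ)) : ℕ :=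
  (S.powerset.filter fun T => ∀ p ∈ T, ∀ q ∈ T, p.1 < q.1 → p.2 < q.2).sup Finset.card

/-- The full rook placement `R` on the board with border `t ∈ F_n` contains the pattern `τ`:
some rectangle `Γ(V_i)` contains an occurrence of `τ`. -/
def PlacementContains {k : ℕ} (τ : Equiv.Perm (Fin k)) (n : ℕ) (t : List Bool)
    (R : Finset (ℕ × ℕ)) : Prop :=
  ∃ i ≤ 2 * n, ∃ f : Fin k → ℕ × ℕ,
    (∀ a, f a ∈ R ∧ (f a).1 ≤ (t.take i).count true ∧ (f a).2 + (t.take i).count false ≤ n) ∧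
    (∀ a b : Fin k, a < b → (f a).1 < (f b).1) ∧
    (∀ a b : Fin k, τ a < τ b → (f a).2 < (f b).2)

def PlacementAvoids {k : ℕ} (τ : Equiv.Perm (Fin k)) (n : ℕ) (t : List Bool)
    (R : Finset (ℕ × ℕ)) : Prop :=
  ¬ PlacementContains τ n t R

/-- `R` is board-minimal on the board with border `t`: every peak corner square holds a rook. -/
def BoardMinimal (n : ℕ) (t : List Bool) (R : Finset (ℕ × ℕ)) : Prop :=
  ∀ i, t[i]? = some true → t[i+1]? = some false →
    ((t.take (i+1)).count true, n - (t.take (i+1)).count false) ∈ R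

/-- Board-minimal full rook placements on boards of `F_n` avoiding the pattern `σ`,
recorded as pairs (border path, rook set). -/
def MinPlacements (n : ℕ) {k : ℕ} (σ : Equiv.Perm (Fin k)) :
    Set (List Bool × Finset (ℕ × ℕ)) :=
  {tR | IsDyckPath n tR.1 ∧ IsFullRookPlacement n tR.1 tR.2 ∧ BoardMinimal n tR.1 tR.2 ∧
        PlacementAvoids σ n tR.1 tR.2}

/-! ### Pattern avoidance in permutations -/

def PermContains {n k : ℕ} (τ : Equiv.Perm (Fin k)) (π : Equiv.Perm (Fin n)) : Prop :=
  ∃ f : Fin k → Fin n, StrictMono f ∧ ∀ a b : Fin k, τ a < τ b → π (f a) < π (f b)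

def PermAvoids {n k : ℕ} (τ : Equiv.Perm (Fin k)) (π : Equiv.Perm (Fin n)) : Prop :=
  ¬ PermContains τ π

/-- The full rook placement associated to a permutation of `[n]`. -/
def permPlacement {n : ℕ} (π : Equiv.Perm (Fin n)) : Finset (ℕ × ℕ) :=
  Finset.univ.image fun i : Fin n => ((i : ℕ) + 1, (π i : ℕ) + 1)

/-! ### Matchings with fixed points -/

/-- A (not necessarily perfect) matching on `{1, …, m}`: pairwise disjoint pairs. -/
def IsPartialMatching (m : ℕ) (M : Finset (ℕ × ℕ)) : Prop :=
  (∀ p ∈ M, p.1 < p.2 ∧ 1 ≤ p.1 ∧ p.2 ≤ m) ∧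
  ∀ p ∈ M, ∀ q ∈ M, p ≠ q → p.1 ≠ q.1 ∧ p.1 ≠ q.2 ∧ p.2 ≠ q.1 ∧ p.2 ≠ q.2

/-- The fixed points (unmatched vertices) of a matching on `{1, …, m}`. -/
def fixedPts (m : ℕ) (M : Finset (ℕ × ℕ)) : Finset ℕ :=
  (Finset.Icc 1 m).filter fun x => ∀ p ∈ M, p.1 ≠ x ∧ p.2 ≠ x

/-- The matched vertices of a matching on `{1, …, m}`. -/
def matchedSet (m : ℕ) (M : Finset (ℕ × ℕ)) : Finset ℕ :=
  (Finset.Icc 1 m).filter fun x => ∃ p ∈ M, p.1 = x ∨ p.2 = x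

/-- The rank (1-based) of `x` inside the finset `S`. -/
def rankIn (S : Finset ℕ) (x : ℕ) : ℕ := (S.filter (· ≤ x)).card

/-- The matching obtained by removing the fixed points and relabeling increasingly. -/
def relabeled (m : ℕ) (M : Finset (ℕ × ℕ)) : Finset (ℕ × ℕ) :=
  M.image fun p => (rankIn (matchedSet m M) p.1, rankIn (matchedSet m M) p.2)

/-! ### Set partitions -/

/-- `(i,j)` is an arc of the set partition `P` of `{1, …, n}`: `i < j` lie in a common block
with no element of that block strictly between them. -/
def PartArc {n : ℕ} (P : Finpartition (Finset.Icc 1 n)) (i j : ℕ) : Prop :=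
  i < j ∧ ∃ B ∈ P.parts, i ∈ B ∧ j ∈ B ∧ ∀ x ∈ B, ¬(i < x ∧ x < j)

/-- The set partition `P` contains the pattern `τ ∈ S_k`. -/
def PartContains {k n : ℕ} (τ : Equiv.Perm (Fin k)) (P : Finpartition (Finset.Icc 1 n)) : Prop :=
  ∃ f : Fin (2 * k) → ℕ, StrictMono f ∧
    ∀ a : Fin k,
      PartArc P (f ⟨a.1, by have := a.isLt; omega⟩)
        (f ⟨2 * k - 1 - (τ a).1, by have := (τ a).isLt; omega⟩)

def PartAvoids {k n : ℕ} (τ : Equiv.Perm (Fin k)) (P : Finpartition (Finset.Icc 1 n)) : Prop :=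
  ¬ PartContains τ P

/-! ### Counting functions -/

/-- `|M_n(τ)|`: the number of `τ`-avoiding perfect matchings of `[2n]`. -/
noncomputable def mcount {k : ℕ} (τ : Equiv.Perm (Fin k)) (n : ℕ) : ℕ :=
  {M : Finset (ℕ × ℕ) | IsPerfectMatching n M ∧ MatchAvoids τ M}.ncard

/-- `|M_n(σ,τ)|`: the number of perfect matchings of `[2n]` avoiding both `σ` and `τ`. -/
noncomputable def mcount2 {k : ℕ} (σ τ : Equiv.Perm (Fin k)) (n : ℕ) : ℕ :=
  {M : Finset (ℕ × ℕ) | IsPerfectMatching n M ∧ MatchAvoids σ M ∧ MatchAvoids τ M}.ncard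

/-- `|P_n(τ)|`: the number of `τ`-avoiding set partitions of `[n]`. -/
noncomputable def pcount {k : ℕ} (τ : Equiv.Perm (Fin k)) (n : ℕ) : ℕ :=
  Nat.card {P : Finpartition (Finset.Icc 1 n) // PartAvoids τ P}

/-- `|P_n(σ,τ)|`: the number of set partitions of `[n]` avoiding both `σ` and `τ`. -/
noncomputable def pcount2 {k : ℕ} (σ τ : Equiv.Perm (Fin k)) (n : ℕ) : ℕ :=
  Nat.card {P : Finpartition (Finset.Icc 1 n) // PartAvoids σ P ∧ PartAvoids τ P}

/-- `|S_n(τ)|`: the number of `τ`-avoiding permutations of `[n]`. -/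
noncomputable def scount {k : ℕ} (τ : Equiv.Perm (Fin k)) (n : ℕ) : ℕ :=
  Nat.card {π : Equiv.Perm (Fin n) // PermAvoids τ π}


namespace M321

def cnt (S : Finset ℕ) (N : ℕ) : ℕ := (S.filter (· ≤ N)).card

theorem cnt_insert {S : Finset ℕ} {a : ℕ} (h : a ∉ S) (N : ℕ) :
    cnt (insert a S) N = cnt S N + if a ≤ N then 1 else 0 := by
  unfold cnt
  rw [Finset.filter_insert]
  split_ifs with h1
  · rw [Finset.card_insert_of_notMem]
    simp [h]
  · simp

theorem cnt_le_card (S : Finset ℕ) (N : ℕ) : cnt S N ≤ S.card :=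
  Finset.card_le_card (Finset.filter_subset _ _)

theorem cnt_eq_card {S : Finset ℕ} {N : ℕ} (h : ∀ a ∈ S, a ≤ N) : cnt S N = S.card := by
  unfold cnt
  rw [Finset.filter_true_of_mem h]

theorem cnt_congr {S : Finset ℕ} {N N' : ℕ} (h : ∀ a ∈ S, a ≤ N ↔ a ≤ N') :
    cnt S N = cnt S N' := by
  unfold cnt
  rw [Finset.filter_congr h]

theorem cnt_mono (S : Finset ℕ) {N N' : ℕ} (h : N ≤ N') : cnt S N ≤ cnt S N' := by
  apply Finset.card_le_card
  intro a
  simp only [Finset.mem_filter]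
  rintro ⟨h1, h2⟩
  exact ⟨h1, h2.trans h⟩

structure Good (i : ℕ) (A B : Finset ℕ) : Prop where
  hA : ∀ a ∈ A, 1 ≤ a ∧ a ≤ i
  hB : ∀ a ∈ B, 1 ≤ a ∧ a ≤ i
  dj : ∀ a ∈ A, a ∉ B
  bal : ∀ N, cnt B N ≤ cnt A N

def Stp (j : ℕ) (tb sb : Bool) (A B A' B' : Finset ℕ) (x : ℕ) : Prop :=
  (tb = true ∧ sb = true ∧ A' = insert j A ∧ B' = B) ∨
  (tb = true ∧ sb = false ∧ A' = A ∧ B' = insert j B) ∨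
  (tb = false ∧ sb = false ∧ A = insert x A' ∧ B = B' ∧ ∀ a ∈ A', a < x) ∨
  (tb = false ∧ sb = true ∧ ∃ y, y ∈ A' ∧ x < y ∧ (∀ a ∈ A', a < x ∨ y ≤ a) ∧
    (∀ b ∈ B', b < y) ∧ A = insert x (A'.erase y) ∧ B = insert y B')

theorem Good.card_le {i : ℕ} {A B : Finset ℕ} (g : Good i A B) : B.card ≤ A.card := by
  have := g.bal i
  rwa [cnt_eq_card (fun a ha => (g.hA a ha).2), cnt_eq_card (fun a ha => (g.hB a ha).2)] at this

theorem ballot_of_le {i : ℕ} {A B : Finset ℕ} (hA : ∀ a ∈ A, a ≤ i) (hB : ∀ a ∈ B, a ≤ i)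
    (h : ∀ N ≤ i, cnt B N ≤ cnt A N) (N : ℕ) : cnt B N ≤ cnt A N := by
  by_cases hN : N ≤ i
  · exact h N hN
  · have h1 : cnt B N = cnt B i := cnt_congr fun a ha => by have := hB a ha; omega
    have h2 : cnt A N = cnt A i := cnt_congr fun a ha => by have := hA a ha; omega
    rw [h1, h2]; exact h i le_rfl

/-- Going backwards preserves goodness. -/
theorem good_back {i : ℕ} {tb sb : Bool} {A B A' B' : Finset ℕ} {x : ℕ}
    (g : Good (i+1) A' B') (st : Stp (i+1) tb sb A B A' B' x)
    (hU : tb = true → i + 1 ∉ A ∧ i + 1 ∉ B)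
    (hD : tb = false → 1 ≤ x ∧ x ≤ i ∧ x ∉ A' ∧ x ∉ B' ∧ i + 1 ∉ A' ∧ i + 1 ∉ B') : Good i A B := by
  obtain ⟨gA, gB, dj, bal⟩ := g
  rcases st with ⟨rfl, rfl, rfl, rfl⟩ | ⟨rfl, rfl, rfl, rfl⟩ | ⟨rfl, rfl, rfl, rfl, hx⟩ |
    ⟨rfl, rfl, y, hy, hxy, hAy, hBy, rfl, rfl⟩
  · obtain ⟨h1, h2⟩ := hU rfl
    have hA : ∀ a ∈ A, 1 ≤ a ∧ a ≤ i := fun a ha => by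
      have := gA a (Finset.mem_insert_of_mem ha)
      have : a ≠ i + 1 := fun h => h1 (h ▸ ha)
      omega
    have hB : ∀ a ∈ B', 1 ≤ a ∧ a ≤ i := fun a ha => by
      have := gB a ha
      have : a ≠ i + 1 := fun h => h2 (h ▸ ha)
      omega
    refine ⟨hA, hB, fun a ha => dj a (Finset.mem_insert_of_mem ha), ?_⟩
    refine ballot_of_le (fun a ha => (hA a ha).2) (fun a ha => (hB a ha).2) fun N hN => ?_
    have := bal N
    rw [cnt_insert h1, if_neg (by omega)] at this
    simpa using this
  · obtain ⟨h1, h2⟩ := hU rfl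
    have hA : ∀ a ∈ A', 1 ≤ a ∧ a ≤ i := fun a ha => by
      have := gA a ha
      have : a ≠ i + 1 := fun h => h1 (h ▸ ha)
      omega
    have hB : ∀ a ∈ B, 1 ≤ a ∧ a ≤ i := fun a ha => by
      have := gB a (Finset.mem_insert_of_mem ha)
      have : a ≠ i + 1 := fun h => h2 (h ▸ ha)
      omega
    refine ⟨hA, hB, fun a ha hb => dj a ha (Finset.mem_insert_of_mem hb), ?_⟩
    refine ballot_of_le (fun a ha => (hA a ha).2) (fun a ha => (hB a ha).2) fun N hN => ?_
    have := bal N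
    rw [cnt_insert h2, if_neg (by omega)] at this
    simpa using this
  · obtain ⟨h1, h2, h3, h4, h5, h6⟩ := hD rfl
    refine ⟨fun a ha => ?_, fun a ha => ?_, fun a ha => ?_, fun N => ?_⟩
    · rcases Finset.mem_insert.1 ha with rfl | ha
      · exact ⟨h1, h2⟩
      · have := gA a ha
        have : a ≠ i + 1 := fun h => h5 (h ▸ ha)
        omega
    · have := gB a ha
      have : a ≠ i + 1 := fun h => h6 (h ▸ ha)
      omega
    · rcases Finset.mem_insert.1 ha with rfl | ha
      · exact h4
      · exact dj a ha
    · rw [cnt_insert h3]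
      have := bal N
      omega
  · obtain ⟨h1, h2, h3, h4, h5, h6⟩ := hD rfl
    have hyB : y ∉ B' := dj y hy
    have hxe : x ∉ A'.erase y := fun h => h3 (Finset.mem_of_mem_erase h)
    have cA : ∀ N, cnt A' N = cnt (A'.erase y) N + if y ≤ N then 1 else 0 := fun N => by
      conv_lhs => rw [← Finset.insert_erase hy]
      rw [cnt_insert (Finset.notMem_erase _ _)]
    refine ⟨fun a ha => ?_, fun a ha => ?_, fun a ha => ?_, fun N => ?_⟩
    · rcases Finset.mem_insert.1 ha with rfl | ha
      · exact ⟨h1, h2⟩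
      · have ha := Finset.mem_of_mem_erase ha
        have := gA a ha
        have : a ≠ i + 1 := fun h => h5 (h ▸ ha)
        omega
    · rcases Finset.mem_insert.1 ha with rfl | ha
      · have := gA a hy
        have : a ≠ i + 1 := fun h => h5 (h ▸ hy)
        omega
      · have := gB a ha
        have : a ≠ i + 1 := fun h => h6 (h ▸ ha)
        omega
    · rcases Finset.mem_insert.1 ha with rfl | ha
      · intro h
        rcases Finset.mem_insert.1 h with h | h
        · omega
        · exact h4 h
      · intro h
        rcases Finset.mem_insert.1 h with h | h
        · exact (Finset.ne_of_mem_erase ha) h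
        · exact dj a (Finset.mem_of_mem_erase ha) h
    · rw [cnt_insert hxe, cnt_insert hyB]
      have e1 := cA N
      have e2 := bal N
      by_cases hN : y ≤ N
      · have e3 : cnt B' N = cnt B' (y - 1) := cnt_congr fun b hb => by have := hBy b hb; omega
        have e4 := bal (y-1)
        have e5 := cA (y-1)
        have e6 := cnt_mono (A'.erase y) (show y - 1 ≤ N by omega)
        rw [if_neg (by omega)] at e5
        rw [if_pos hN, if_pos (by omega)]
        omega
      · rw [if_neg hN] at e1 ⊢
        omega

/-- Going forwards preserves goodness. -/
theorem good_fwd {i : ℕ} {tb sb : Bool} {A B A' B' : Finset ℕ} {x : ℕ}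
    (g : Good i A B) (st : Stp (i+1) tb sb A B A' B' x)
    (hc : B'.card ≤ A'.card)
    (hD : tb = false → x ∉ A' ∧ ∀ y ∈ A', y ∈ B → y ∉ B') : Good (i+1) A' B' := by
  obtain ⟨gA, gB, dj, bal⟩ := g
  rcases st with ⟨rfl, rfl, rfl, rfl⟩ | ⟨rfl, rfl, rfl, rfl⟩ | ⟨rfl, rfl, rfl, rfl, hx⟩ |
    ⟨rfl, rfl, y, hy, hxy, hAy, hBy, rfl, rfl⟩
  · refine ⟨fun a ha => ?_, fun a ha => ?_, fun a ha => ?_, fun N => ?_⟩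
    · rcases Finset.mem_insert.1 ha with rfl | ha
      · omega
      · have := gA a ha; omega
    · have := gB a ha; omega
    · rcases Finset.mem_insert.1 ha with rfl | ha
      · intro h; have := gB _ h; omega
      · exact dj a ha
    · rw [cnt_insert (fun h => by have := gA _ h; omega)]
      have := bal N; omega
  · have hj : i + 1 ∉ B := fun h => by have := gB _ h; omega
    refine ⟨fun a ha => ?_, fun a ha => ?_, fun a ha => ?_, fun N => ?_⟩
    · have := gA a ha; omega
    · rcases Finset.mem_insert.1 ha with rfl | ha
      · omega
      · have := gB a ha; omega
    · intro h
      rcases Finset.mem_insert.1 h with rfl | h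
      · have := gA _ ha; omega
      · exact dj a ha h
    · by_cases hN : i + 1 ≤ N
      · rw [cnt_eq_card, cnt_eq_card]
        · exact hc
        · intro a ha; have := gA a ha; omega
        · intro a ha
          rcases Finset.mem_insert.1 ha with rfl | ha
          · omega
          · have := gB a ha; omega
      · rw [cnt_insert hj, if_neg hN]
        exact bal N
  · obtain ⟨h1, h2⟩ := hD rfl
    refine ⟨fun a ha => ?_, fun a ha => ?_, fun a ha => dj a (Finset.mem_insert_of_mem ha),
      fun N => ?_⟩
    · have := gA a (Finset.mem_insert_of_mem ha); omega
    · have := gB a ha; omega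
    · by_cases hN : x ≤ N
      · rw [cnt_eq_card (S := A') (fun a ha => by have := hx a ha; omega)]
        exact (cnt_le_card _ _).trans hc
      · have := bal N
        rw [cnt_insert h1, if_neg hN] at this
        exact this
  · obtain ⟨h1, h2⟩ := hD rfl
    have hyB : y ∉ B' := h2 y hy (Finset.mem_insert_self _ _)
    have hxe : x ∉ A'.erase y := fun h => h1 (Finset.mem_of_mem_erase h)
    have cA : ∀ N, cnt A' N = cnt (A'.erase y) N + if y ≤ N then 1 else 0 := fun N => by
      conv_lhs => rw [← Finset.insert_erase hy]
      rw [cnt_insert (Finset.notMem_erase _ _)]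
    refine ⟨fun a ha => ?_, fun a ha => ?_, fun a ha => ?_, fun N => ?_⟩
    · by_cases hay : a = y
      · have := gB y (Finset.mem_insert_self _ _); omega
      · have := gA a (Finset.mem_insert_of_mem (Finset.mem_erase.2 ⟨hay, ha⟩)); omega
    · have := gB a (Finset.mem_insert_of_mem ha); omega
    · intro h
      by_cases hay : a = y
      · exact hyB (hay ▸ h)
      · exact dj a (Finset.mem_insert_of_mem (Finset.mem_erase.2 ⟨hay, ha⟩))
          (Finset.mem_insert_of_mem h)
    · have e1 := bal N
      have e2 := bal y
      rw [cnt_insert hxe, cnt_insert hyB] at e1 e2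
      rw [cA N]
      by_cases hN : y ≤ N
      · rw [if_pos (show y ≤ N by omega), if_pos (show x ≤ N by omega)] at e1
        rw [if_pos hN]
        omega
      · by_cases hN' : x ≤ N
        · rw [if_pos le_rfl, if_pos hxy.le] at e2
          have e3 := cnt_mono B' (show N ≤ y by omega)
          have e4 : cnt (A'.erase y) N = cnt (A'.erase y) y := cnt_congr fun a ha => by
            have := hAy a (Finset.mem_of_mem_erase ha)
            have := Finset.ne_of_mem_erase ha
            omega
          omega
        · rw [if_neg hN, if_neg hN'] at e1
          omega

/-- Abstract facts on matchings of shape `t`. -/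
structure MF (n : ℕ) (t : ℕ → Bool) (M : Finset (ℕ × ℕ)) : Prop where
  lt : ∀ {a c}, (a, c) ∈ M → a < c ∧ 1 ≤ a ∧ c ≤ 2 * n
  u1 : ∀ {a c d}, (a, c) ∈ M → (a, d) ∈ M → c = d
  u2 : ∀ {a c d}, (a, d) ∈ M → (c, d) ∈ M → a = c
  u3 : ∀ {a c d}, (a, c) ∈ M → (c, d) ∈ M → False
  op : ∀ i < 2 * n, t i = true → ∃ c, (i + 1, c) ∈ M
  cl : ∀ i < 2 * n, t i = false → ∃ x, (x, i + 1) ∈ M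

structure Inv (i : ℕ) (A B : Finset ℕ) (M : Finset (ℕ × ℕ)) : Prop where
  op : ∀ v, (v ∈ A ∨ v ∈ B) ↔ ∃ c, (v, c) ∈ M ∧ v ≤ i ∧ i < c
  cr : ∀ v N, (∃ y ∈ A, ∃ z ∈ B, v < y ∧ y < z ∧ z ≤ N) ↔
    ∃ y cy z cz, (y, cy) ∈ M ∧ (z, cz) ∈ M ∧ y ≤ i ∧ z ≤ i ∧ i < cy ∧ cy < cz ∧
      v < y ∧ y < z ∧ z ≤ N

set_option maxHeartbeats 1000000 in
theorem inv_back {n i : ℕ} {t : ℕ → Bool} {sb : Bool} {A B A' B' : Finset ℕ} {x : ℕ}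
    {M : Finset (ℕ × ℕ)} (hM : MF n t M) (hi : i < 2 * n)
    (I : Inv (i+1) A' B' M) (st : Stp (i+1) (t i) sb A B A' B' x)
    (hU : t i = true → i + 1 ∉ A ∧ i + 1 ∉ B)
    (hD : t i = false → (x, i+1) ∈ M) : Inv i A B M := by
  obtain ⟨io, ic⟩ := I
  have hcase : t i = true → (∀ v, (v ∈ A ∨ v ∈ B) ↔ (v ≠ i + 1 ∧ (v ∈ A' ∨ v ∈ B'))) →
      (∀ y z, (y ∈ A ∧ z ∈ B) ↔ (y ≠ i + 1 ∧ z ≠ i + 1 ∧ y ∈ A' ∧ z ∈ B')) → Inv i A B M := by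
    intro ht h1 h2
    obtain ⟨c0, hc0⟩ := hM.op i hi ht
    have hne : ∀ {v c}, (v, c) ∈ M → c ≠ i + 1 := fun h e => hM.u3 h (e ▸ hc0)
    constructor
    · intro v
      rw [h1, io]
      constructor
      · rintro ⟨h, c, hc, h3, h4⟩
        exact ⟨c, hc, by omega, by omega⟩
      · rintro ⟨c, hc, h3, h4⟩
        have := hne hc
        exact ⟨by omega, c, hc, by omega, by omega⟩
    · intro v N
      have h3 := ic v (min N i)
      have hle : ∀ z, z ∈ B' → z ≤ i + 1 := fun z hz => by
        obtain ⟨c, _, h, _⟩ := (io z).1 (Or.inr hz); exact h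
      constructor
      · rintro ⟨y, hy, z, hz, a1, a2, a3⟩
        obtain ⟨b1, b2, b3, b4⟩ := (h2 y z).1 ⟨hy, hz⟩
        have := hle z b4
        obtain ⟨y, cy, z, cz, c1, c2, c3, c4, c5, c6, c7, c8, c9⟩ :=
          h3.1 ⟨y, b3, z, b4, a1, a2, by omega⟩
        exact ⟨y, cy, z, cz, c1, c2, by omega, by omega, by omega, c6, c7, c8, by omega⟩
      · rintro ⟨y, cy, z, cz, c1, c2, c3, c4, c5, c6, c7, c8, c9⟩
        have := hne c1
        obtain ⟨y, hy, z, hz, a1, a2, a3⟩ :=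
          h3.2 ⟨y, cy, z, cz, c1, c2, by omega, by omega, by omega, c6, c7, c8, by omega⟩
        obtain ⟨d1, d2⟩ := (h2 y z).2 ⟨by omega, by omega, hy, hz⟩
        exact ⟨y, d1, z, d2, a1, a2, by omega⟩
  have hop : t i = false → (∀ v, (v ∈ A ∨ v ∈ B) ↔ (v = x ∨ (v ∈ A' ∨ v ∈ B'))) →
      ∀ v, (v ∈ A ∨ v ∈ B) ↔ ∃ c, (v, c) ∈ M ∧ v ≤ i ∧ i < c := by
    intro ht h1 v
    have hx := hD ht
    rw [h1, io]
    constructor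
    · rintro (rfl | ⟨c, hc, h3, h4⟩)
      · have := hM.lt hx
        exact ⟨_, hx, by omega, by omega⟩
      · have : v ≠ i + 1 := fun e => hM.u3 hx (e ▸ hc)
        exact ⟨c, hc, by omega, by omega⟩
    · rintro ⟨c, hc, h3, h4⟩
      by_cases e : c = i + 1
      · subst e; exact Or.inl (hM.u2 hc hx)
      · exact Or.inr ⟨c, hc, by omega, by omega⟩
  have hne : t i = false → ∀ {v c}, (v, c) ∈ M → v ≠ i + 1 :=
    fun ht v c h e => hM.u3 (hD ht) (e ▸ h)
  rcases st with ⟨ht, rfl, rfl, rfl⟩ | ⟨ht, rfl, rfl, rfl⟩ | ⟨ht, rfl, rfl, rfl, hx⟩ |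
    ⟨ht, rfl, y0, hy, hxy, hAy, hBy, rfl, rfl⟩
  · obtain ⟨h1, h2⟩ := hU ht
    apply hcase ht <;> clear hcase hop hne ic io hU hD
    · intro v
      have : v ∈ A ∨ v ∈ B' → v ≠ i + 1 := by rintro (h | h) rfl <;> contradiction
      simp only [Finset.mem_insert]
      tauto
    · intro y z
      have : y ∈ A → y ≠ i + 1 := by rintro h rfl; contradiction
      have : z ∈ B' → z ≠ i + 1 := by rintro h rfl; contradiction
      simp only [Finset.mem_insert]
      tauto
  · obtain ⟨h1, h2⟩ := hU ht
    apply hcase ht <;> clear hcase hop hne ic io hU hD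
    · intro v
      have : v ∈ A' ∨ v ∈ B → v ≠ i + 1 := by rintro (h | h) rfl <;> contradiction
      simp only [Finset.mem_insert]
      tauto
    · intro y z
      have : y ∈ A' → y ≠ i + 1 := by rintro h rfl; contradiction
      have : z ∈ B → z ≠ i + 1 := by rintro h rfl; contradiction
      simp only [Finset.mem_insert]
      tauto
  · have hxM := hD ht
    have hxl := hM.lt hxM
    refine ⟨hop ht fun v => ?_, fun v N => ?_⟩
    · simp only [Finset.mem_insert]; tauto
    · constructor
      · rintro ⟨y, hy, z, hz, a1, a2, a3⟩
        rcases Finset.mem_insert.1 hy with rfl | hy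
        · obtain ⟨c, hc, h3, h4⟩ := (io z).1 (Or.inr hz)
          have := hne ht hc
          exact ⟨y, i+1, z, c, hxM, hc, by omega, by omega, by omega, by omega, a1, a2, a3⟩
        · obtain ⟨y, cy, z, cz, c1, c2, c3, c4, c5, c6, c7, c8, c9⟩ :=
            (ic v N).1 ⟨y, hy, z, hz, a1, a2, a3⟩
          have := hne ht c1
          have := hne ht c2
          exact ⟨y, cy, z, cz, c1, c2, by omega, by omega, by omega, c6, c7, c8, c9⟩
      · rintro ⟨y, cy, z, cz, c1, c2, c3, c4, c5, c6, c7, c8, c9⟩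
        by_cases e : cy = i + 1
        · subst e
          obtain rfl := hM.u2 c1 hxM
          rcases (io z).2 ⟨cz, c2, by omega, by omega⟩ with h | h
          · have := hx z h; omega
          · exact ⟨y, Finset.mem_insert_self _ _, z, h, c7, c8, c9⟩
        · obtain ⟨y, hy, z, hz, a1, a2, a3⟩ :=
            (ic v N).2 ⟨y, cy, z, cz, c1, c2, by omega, by omega, by omega, c6, c7, c8, c9⟩
          exact ⟨y, Finset.mem_insert_of_mem hy, z, hz, a1, a2, a3⟩
  · have hxM := hD ht
    have hxl := hM.lt hxM
    obtain ⟨cy0, hcy0, y01, y02⟩ := (io y0).1 (Or.inl hy)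
    have hy0n := hne ht hcy0
    refine ⟨hop ht fun v => ?_, fun v N => ?_⟩
    · simp only [Finset.mem_insert, Finset.mem_erase]
      by_cases e : v = y0
      · subst e; tauto
      · tauto
    · constructor
      · rintro ⟨y, hy', z, hz, a1, a2, a3⟩
        rcases Finset.mem_insert.1 hz with rfl | hz
        · have : y ≤ x := by
            rcases Finset.mem_insert.1 hy' with rfl | h
            · exact le_rfl
            · have := hAy y (Finset.mem_of_mem_erase h); omega
          exact ⟨x, i+1, z, cy0, hxM, hcy0, by omega, by omega, by omega, by omega, by omega,
            by omega, a3⟩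
        · rcases Finset.mem_insert.1 hy' with rfl | hy'
          · obtain ⟨c, hc, h3, h4⟩ := (io z).1 (Or.inr hz)
            have := hne ht hc
            exact ⟨y, i+1, z, c, hxM, hc, by omega, by omega, by omega, by omega, a1, a2, a3⟩
          · obtain ⟨y, cy, z, cz, c1, c2, c3, c4, c5, c6, c7, c8, c9⟩ :=
              (ic v N).1 ⟨y, Finset.mem_of_mem_erase hy', z, hz, a1, a2, a3⟩
            have := hne ht c1
            have := hne ht c2
            exact ⟨y, cy, z, cz, c1, c2, by omega, by omega, by omega, c6, c7, c8, c9⟩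
      · rintro ⟨y, cy, z, cz, c1, c2, c3, c4, c5, c6, c7, c8, c9⟩
        by_cases e : cy = i + 1
        · subst e
          obtain rfl := hM.u2 c1 hxM
          rcases (io z).2 ⟨cz, c2, by omega, by omega⟩ with h | h
          · have := hAy z h
            exact ⟨y, Finset.mem_insert_self _ _, y0, Finset.mem_insert_self _ _, c7, hxy,
              by omega⟩
          · exact ⟨y, Finset.mem_insert_self _ _, z, Finset.mem_insert_of_mem h, c7, c8, c9⟩
        · obtain ⟨y, hy, z, hz, a1, a2, a3⟩ :=
            (ic v N).2 ⟨y, cy, z, cz, c1, c2, by omega, by omega, by omega, c6, c7, c8, c9⟩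
          have := hBy z hz
          exact ⟨y, Finset.mem_insert_of_mem (Finset.mem_erase.2 ⟨by omega, hy⟩), z,
            Finset.mem_insert_of_mem hz, a1, a2, a3⟩

theorem stp_back_unique {j : ℕ} {tb sb sb' : Bool} {A B C D A' B' : Finset ℕ} {x x' : ℕ}
    (hA : j ∉ A) (hB : j ∉ B) (hC : j ∉ C) (hD : j ∉ D)
    (dj : ∀ a ∈ A', a ∉ B')
    (s1 : Stp j tb sb A B A' B' x) (s2 : Stp j tb sb' C D A' B' x') (hx : tb = false → x = x') :
    sb = sb' ∧ A = C ∧ B = D := by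
  rcases s1 with ⟨rfl, rfl, h1, h2⟩ | ⟨rfl, rfl, h1, h2⟩ | ⟨rfl, rfl, h1, h2, h3⟩ |
    ⟨rfl, rfl, y, h1, h2, h3, h4, h5, h6⟩ <;>
  rcases s2 with ⟨h, rfl, k1, k2⟩ | ⟨h, rfl, k1, k2⟩ | ⟨h, rfl, k1, k2, k3⟩ |
    ⟨h, rfl, y', k1, k2, k3, k4, k5, k6⟩ <;> first | (exfalso; simp at h; done) | skip
  · refine ⟨rfl, ?_, h2.symm.trans k2⟩
    rw [← Finset.erase_insert hA, ← Finset.erase_insert hC, ← h1, ← k1]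
  · exfalso; subst k2; subst h1; exact dj j (by simp) (by simp)
  · exfalso; subst h2; subst k1; exact dj j (by simp) (by simp)
  · refine ⟨rfl, h1.symm.trans k1, ?_⟩
    rw [← Finset.erase_insert hB, ← Finset.erase_insert hD, ← h2, ← k2]
  · obtain rfl := hx rfl
    exact ⟨rfl, h1.trans k1.symm, h2.trans k2.symm⟩
  · exfalso
    obtain rfl := hx rfl
    have := h3 _ k1; omega
  · exfalso
    obtain rfl := hx rfl
    have := k3 _ h1; omega
  · obtain rfl := hx rfl
    have e1 := h3 _ k1
    have e2 := k3 _ h1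
    obtain rfl : y = y' := by omega
    exact ⟨rfl, h5.trans k5.symm, h6.trans k6.symm⟩

theorem stp_fwd_unique {j : ℕ} {tb sb : Bool} {A B A' B' C' D' : Finset ℕ} {x x' : ℕ}
    (dj : ∀ a ∈ A', a ∉ B') (dj' : ∀ a ∈ C', a ∉ D')
    (s1 : Stp j tb sb A B A' B' x) (s2 : Stp j tb sb A B C' D' x') :
    A' = C' ∧ B' = D' ∧ (tb = false → x = x') := by
  rcases s1 with ⟨rfl, rfl, h1, h2⟩ | ⟨rfl, rfl, h1, h2⟩ | ⟨rfl, rfl, h1, h2, h3⟩ |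
    ⟨rfl, rfl, y, h1, h2, h3, h4, h5, h6⟩ <;>
  rcases s2 with ⟨h, h', k1, k2⟩ | ⟨h, h', k1, k2⟩ | ⟨h, h', k1, k2, k3⟩ |
    ⟨h, h', y', k1, k2, k3, k4, k5, k6⟩ <;>
    first | (exfalso; simp at h; done) | (exfalso; simp at h'; done) | skip
  · exact ⟨h1.trans k1.symm, h2.trans k2.symm, by simp⟩
  · exact ⟨h1.trans k1.symm, h2.trans k2.symm, by simp⟩
  · have e1 : x ∈ insert x' C' := by rw [← k1, h1]; simp
    have e2 : x' ∈ insert x A' := by rw [← h1, k1]; simp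
    have hxx : x = x' := by
      rcases Finset.mem_insert.1 e1 with e1 | e1
      · exact e1
      · rcases Finset.mem_insert.1 e2 with e2 | e2
        · exact e2.symm
        · have := h3 _ e2; have := k3 _ e1; omega
    subst hxx
    refine ⟨?_, h2.symm.trans k2, fun _ => rfl⟩
    rw [← Finset.erase_insert (s := A') (a := x) (fun h => by have := h3 _ h; omega),
      ← Finset.erase_insert (s := C') (a := x) (fun h => by have := k3 _ h; omega), ← h1, ← k1]
  · have e1 : y ∈ insert y' D' := by rw [← k6, h6]; simp
    have e2 : y' ∈ insert y B' := by rw [← h6, k6]; simp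
    have hyy : y = y' := by
      rcases Finset.mem_insert.1 e1 with e1 | e1
      · exact e1
      · rcases Finset.mem_insert.1 e2 with e2 | e2
        · exact e2.symm
        · have := h4 _ e2; have := k4 _ e1; omega
    subst hyy
    have e1 : x ∈ insert x' (C'.erase y) := by rw [← k5, h5]; simp
    have e2 : x' ∈ insert x (A'.erase y) := by rw [← h5, k5]; simp
    have hxx : x = x' := by
      rcases Finset.mem_insert.1 e1 with e1 | e1
      · exact e1
      · rcases Finset.mem_insert.1 e2 with e2 | e2
        · exact e2.symm
        · have := h3 _ (Finset.mem_of_mem_erase e2)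
          have := k3 _ (Finset.mem_of_mem_erase e1); omega
    subst hxx
    have hxA : x ∉ A'.erase y := fun h => by have := h3 _ (Finset.mem_of_mem_erase h); omega
    have hxC : x ∉ C'.erase y := fun h => by have := k3 _ (Finset.mem_of_mem_erase h); omega
    refine ⟨?_, ?_, fun _ => rfl⟩
    · rw [← Finset.insert_erase h1, ← Finset.insert_erase k1, ← Finset.erase_insert hxA,
        ← Finset.erase_insert hxC, ← h5, ← k5]
    · rw [← Finset.erase_insert (dj y h1), ← Finset.erase_insert (dj' y k1), ← h6, ← k6]

structure Rel (n : ℕ) (t s : ℕ → Bool) (M : Finset (ℕ × ℕ)) (A B : ℕ → Finset ℕ) : Prop where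
  good : ∀ i ≤ 2 * n, Good i (A i) (B i)
  endA : A (2 * n) = ∅
  endB : B (2 * n) = ∅
  step : ∀ i < 2 * n, ∃ x, Stp (i+1) (t i) (s i) (A i) (B i) (A (i+1)) (B (i+1)) x ∧
    (t i = false → (x, i+1) ∈ M)

theorem Rel.s_unique {n : ℕ} {t s s' : ℕ → Bool} {M : Finset (ℕ × ℕ)} {A B A' B' : ℕ → Finset ℕ}
    (hM : MF n t M) (r : Rel n t s M A B) (r' : Rel n t s' M A' B') :
    ∀ i < 2 * n, s i = s' i := by
  have key : ∀ i < 2 * n, A (i+1) = A' (i+1) → B (i+1) = B' (i+1) →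
      s i = s' i ∧ A i = A' i ∧ B i = B' i := by
    intro i hi h1 h2
    obtain ⟨x, st, hx⟩ := r.step i hi
    obtain ⟨x', st', hx'⟩ := r'.step i hi
    rw [← h1, ← h2] at st'
    have g := r.good i hi.le
    have g' := r'.good i hi.le
    exact stp_back_unique (fun h => by have := g.hA _ h; omega) (fun h => by have := g.hB _ h; omega)
      (fun h => by have := g'.hA _ h; omega) (fun h => by have := g'.hB _ h; omega)
      (r.good (i+1) (by omega)).dj st st' (fun h => hM.u2 (hx h) (hx' h))
  have all : ∀ k ≤ 2 * n, A (2 * n - k) = A' (2 * n - k) ∧ B (2 * n - k) = B' (2 * n - k) := by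
    intro k
    induction k with
    | zero => intro _; simp [r.endA, r.endB, r'.endA, r'.endB]
    | succ k ih =>
      intro hk
      obtain ⟨h1, h2⟩ := ih (by omega)
      have e : 2 * n - k = (2 * n - (k+1)) + 1 := by omega
      rw [e] at h1 h2
      exact (key _ (by omega) h1 h2).2
  intro i hi
  have h := all (2 * n - (i+1)) (by omega)
  rw [show 2 * n - (2 * n - (i+1)) = i + 1 by omega] at h
  exact (key i hi h.1 h.2).1

theorem Rel.M_sub {n : ℕ} {t s : ℕ → Bool} {M M' : Finset (ℕ × ℕ)} {A B A' B' : ℕ → Finset ℕ}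
    (hM : MF n t M) (r : Rel n t s M A B) (r' : Rel n t s M' A' B') : M ⊆ M' := by
  have g0 : ∀ {A B}, Good 0 A B → A = ∅ ∧ B = ∅ := by
    intro A B g
    constructor
    · apply Finset.eq_empty_of_forall_notMem; intro a ha; have := g.hA a ha; omega
    · apply Finset.eq_empty_of_forall_notMem; intro a ha; have := g.hB a ha; omega
  have key : ∀ i < 2 * n, A i = A' i → B i = B' i → A (i+1) = A' (i+1) ∧ B (i+1) = B' (i+1) ∧
      (t i = false → ∃ x, (x, i+1) ∈ M ∧ (x, i+1) ∈ M') := by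
    intro i hi h1 h2
    obtain ⟨x, st, hx⟩ := r.step i hi
    obtain ⟨x', st', hx'⟩ := r'.step i hi
    rw [← h1, ← h2] at st'
    obtain ⟨a1, a2, a3⟩ := stp_fwd_unique (r.good (i+1) (by omega)).dj
      (r'.good (i+1) (by omega)).dj st st'
    exact ⟨a1, a2, fun h => ⟨x, hx h, a3 h ▸ hx' h⟩⟩
  have all : ∀ k ≤ 2 * n, A k = A' k ∧ B k = B' k := by
    intro k
    induction k with
    | zero =>
      intro h
      have h1 := g0 (r.good 0 h)
      have h2 := g0 (r'.good 0 h)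
      exact ⟨h1.1.trans h2.1.symm, h1.2.trans h2.2.symm⟩
    | succ k ih =>
      intro hk
      obtain ⟨h1, h2⟩ := ih (by omega)
      have := key k (by omega) h1 h2
      exact ⟨this.1, this.2.1⟩
  rintro ⟨a, c⟩ hac
  have hl := hM.lt hac
  obtain ⟨i, rfl⟩ : ∃ i, c = i + 1 := ⟨c - 1, by omega⟩
  have hi : i < 2 * n := by omega
  have hti : t i = false := by
    by_contra h
    obtain ⟨c, hc⟩ := hM.op i hi (by simpa using h)
    exact hM.u3 hac hc
  obtain ⟨x, h1, h2⟩ := (key i hi (all i hi.le).1 (all i hi.le).2).2.2 hti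
  rwa [hM.u2 hac h1]

def sgn (b : Bool) : ℤ := if b then 1 else -1

theorem stp_card {i : ℕ} {tb sb : Bool} {A B A' B' : Finset ℕ} {x : ℕ}
    (g : Good i A B) (g' : Good (i+1) A' B') (st : Stp (i+1) tb sb A B A' B' x) :
    (A'.card : ℤ) + B'.card = A.card + B.card + sgn tb ∧
    (A'.card : ℤ) - B'.card = A.card - B.card + sgn sb := by
  have hA : i + 1 ∉ A := fun h => by have := g.hA _ h; omega
  have hB : i + 1 ∉ B := fun h => by have := g.hB _ h; omega
  rcases st with ⟨rfl, rfl, rfl, rfl⟩ | ⟨rfl, rfl, rfl, rfl⟩ | ⟨rfl, rfl, rfl, rfl, hx⟩ |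
    ⟨rfl, rfl, y, hy, hxy, hAy, hBy, rfl, rfl⟩
  · rw [Finset.card_insert_of_notMem hA]; simp [sgn]; constructor <;> ring
  · rw [Finset.card_insert_of_notMem hB]; simp [sgn]; constructor <;> ring
  · rw [Finset.card_insert_of_notMem (fun h => by have := hx _ h; omega)]
    simp [sgn]
    omega
  · have h1 : x ∉ A'.erase y := fun h => by have := hAy _ (Finset.mem_of_mem_erase h); omega
    have h2 := g'.dj y hy
    have h3 := Finset.card_erase_add_one hy
    rw [Finset.card_insert_of_notMem h1, Finset.card_insert_of_notMem h2]
    simp only [sgn]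
    simp
    omega

theorem exists_seq {α : Type} (P : ℕ → α → Prop) (Q : ℕ → α → α → Prop) (h0 : ∃ a, P 0 a)
    (hs : ∀ k a, P k a → ∃ b, P (k+1) b ∧ Q k a b) :
    ∃ f : ℕ → α, (∀ k, P k (f k)) ∧ ∀ k, Q k (f k) (f (k+1)) := by
  classical
  obtain ⟨a0, ha0⟩ := h0
  let g : (k : ℕ) → {a // P k a} := fun k =>
    Nat.rec ⟨a0, ha0⟩ (fun k p => ⟨(hs k p.1 p.2).choose, (hs k p.1 p.2).choose_spec.1⟩) k
  exact ⟨fun k => (g k).1, fun k => (g k).2, fun k => (hs k (g k).1 (g k).2).choose_spec.2⟩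

def NC (M : Finset (ℕ × ℕ)) : Prop :=
  ¬ ∃ x cx y cy z cz, (x, cx) ∈ M ∧ (y, cy) ∈ M ∧ (z, cz) ∈ M ∧ x < y ∧ y < z ∧ z < cx ∧
    cx < cy ∧ cy < cz

theorem ex_back {n i : ℕ} {t : ℕ → Bool} {A' B' : Finset ℕ} {M : Finset (ℕ × ℕ)}
    (hM : MF n t M) (nc : NC M) (hi : i < 2 * n) (g : Good (i+1) A' B')
    (I : Inv (i+1) A' B' M) :
    ∃ A B sb x, Stp (i+1) (t i) sb A B A' B' x ∧ (t i = false → (x, i+1) ∈ M) ∧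
      Good i A B ∧ Inv i A B M := by
  suffices h : ∃ A B sb x, Stp (i+1) (t i) sb A B A' B' x ∧ (t i = false → (x, i+1) ∈ M) ∧
      (t i = true → i + 1 ∉ A ∧ i + 1 ∉ B) by
    obtain ⟨A, B, sb, x, h1, h2, h3⟩ := h
    refine ⟨A, B, sb, x, h1, h2, good_back g h1 h3 (fun ht => ?_), inv_back hM hi I h1 h3 h2⟩
    have hx := h2 ht
    have := hM.lt hx
    have e1 : ¬ (x ∈ A' ∨ x ∈ B') := by
      rw [I.op]
      rintro ⟨c, hc, _, h⟩
      have := hM.u1 hc hx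
      omega
    have e2 : ¬ (i + 1 ∈ A' ∨ i + 1 ∈ B') := by
      rw [I.op]
      rintro ⟨c, hc, _, h⟩
      exact hM.u3 hx hc
    push Not at e1 e2
    exact ⟨by omega, by omega, e1.1, e1.2, e2.1, e2.2⟩
  by_cases ht : t i = true
  · obtain ⟨c, hc⟩ := hM.op i hi ht
    have hm := (I.op (i+1)).2 ⟨c, hc, le_rfl, by have := hM.lt hc; omega⟩
    by_cases hA : i + 1 ∈ A'
    · refine ⟨A'.erase (i+1), B', true, 0, Or.inl ⟨ht, rfl, (Finset.insert_erase hA).symm, rfl⟩,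
        by simp [ht], fun _ => ⟨Finset.notMem_erase _ _, g.dj _ hA⟩⟩
    · have hB : i + 1 ∈ B' := hm.resolve_left hA
      refine ⟨A', B'.erase (i+1), false, 0,
        Or.inr (Or.inl ⟨ht, rfl, rfl, (Finset.insert_erase hB).symm⟩),
        by simp [ht], fun _ => ⟨hA, Finset.notMem_erase _ _⟩⟩
  · have ht : t i = false := by simpa using ht
    obtain ⟨x, hx⟩ := hM.cl i hi ht
    by_cases hall : ∀ a ∈ A', a < x
    · exact ⟨insert x A', B', false, x, Or.inr (Or.inr (Or.inl ⟨ht, rfl, rfl, rfl, hall⟩)),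
        fun _ => hx, by simp [ht]⟩
    · push Not at hall
      obtain ⟨a, ha, hxa⟩ := hall
      have hex : ∃ y, y ∈ A' ∧ x ≤ y := ⟨a, ha, hxa⟩
      classical
      obtain ⟨h1, h2⟩ := Nat.find_spec hex
      have hmin : ∀ a ∈ A', a < x ∨ Nat.find hex ≤ a := fun a ha => by
        by_contra h
        push Not at h
        exact Nat.find_min hex h.2 ⟨ha, h.1⟩
      generalize Nat.find hex = y at *
      obtain ⟨cy, hcy, hyi, hicy⟩ := (I.op y).1 (Or.inl h1)
      have hxy : x ≠ y := by
        rintro rfl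
        have := hM.u1 hx hcy
        omega
      refine ⟨insert x (A'.erase y), insert y B', true, x,
        Or.inr (Or.inr (Or.inr ⟨ht, rfl, y, h1, by omega, hmin, ?_, rfl, rfl⟩)),
        fun _ => hx, by simp [ht]⟩
      intro b hb
      by_contra hyb
      have hne : b ≠ y := fun e => g.dj y h1 (e ▸ hb)
      obtain ⟨y, cy, z, cz, c1, c2, c3, c4, c5, c6, c7, c8, c9⟩ :=
        (I.cr x b).1 ⟨y, h1, b, hb, by omega, by omega, le_rfl⟩
      have : z ≠ i + 1 := by rintro rfl; exact hM.u3 hx c2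
      exact nc ⟨x, i+1, y, cy, z, cz, hx, c1, c2, c7, c8, by omega, c5, c6⟩

theorem ex1 {n : ℕ} {t : ℕ → Bool} {M : Finset (ℕ × ℕ)} (hM : MF n t M) (nc : NC M) :
    ∃ s A B, Rel n t s M A B := by
  let P : ℕ → Finset ℕ × Finset ℕ → Prop := fun k T => k ≤ 2 * n →
    Good (2 * n - k) T.1 T.2 ∧ Inv (2 * n - k) T.1 T.2 M ∧ (k = 0 → T.1 = ∅ ∧ T.2 = ∅)
  let Q : ℕ → Finset ℕ × Finset ℕ → Finset ℕ × Finset ℕ → Prop := fun k T T' => k < 2 * n →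
    ∃ sb x, Stp (2 * n - k) (t (2 * n - (k+1))) sb T'.1 T'.2 T.1 T.2 x ∧
      (t (2 * n - (k+1)) = false → (x, 2 * n - k) ∈ M)
  suffices hh : (∃ a, P 0 a) ∧ ∀ k a, P k a → ∃ b, P (k+1) b ∧ Q k a b by
    obtain ⟨f, hP, hQ⟩ := exists_seq P Q hh.1 hh.2
    have hQ' : ∀ i, ∃ sb, i < 2 * n → ∃ x, Stp (i+1) (t i) sb (f (2*n-i)).1 (f (2*n-i)).2
        (f (2*n-(i+1))).1 (f (2*n-(i+1))).2 x ∧ (t i = false → (x, i+1) ∈ M) := by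
      intro i
      by_cases hi : i < 2 * n
      · obtain ⟨sb, x, h⟩ := hQ (2*n-(i+1)) (by omega)
        rw [show 2 * n - (2*n-(i+1)) = i + 1 by omega,
          show 2 * n - (i + 1) + 1 = 2 * n - i by omega,
          show 2 * n - (2 * n - i) = i by omega] at h
        exact ⟨sb, fun _ => ⟨x, h⟩⟩
      · exact ⟨true, fun h => absurd h hi⟩
    choose s hs using hQ'
    refine ⟨s, fun i => (f (2*n-i)).1, fun i => (f (2*n-i)).2, fun i hi => ?_, ?_, ?_, hs⟩
    · have := (hP (2*n-i) (by omega)).1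
      rwa [show 2 * n - (2 * n - i) = i by omega] at this
    · simpa using ((hP 0 (by omega)).2.2 rfl).1
    · simpa using ((hP 0 (by omega)).2.2 rfl).2
  refine ⟨⟨(∅, ∅), fun _ => ⟨⟨by simp, by simp, by simp, by simp [cnt]⟩, ⟨?_, ?_⟩, by simp⟩⟩, ?_⟩
  · intro v
    constructor
    · simp
    · rintro ⟨c, hc, _, h⟩
      have := hM.lt hc
      omega
  · intro v N
    constructor
    · simp
    · rintro ⟨y, cy, z, cz, c1, c2, c3, c4, c5, c6, c7, c8, c9⟩
      have := hM.lt c1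
      omega
  · intro k T hP
    by_cases hk : k < 2 * n
    · obtain ⟨g, I, _⟩ := hP hk.le
      rw [show 2 * n - k = 2 * n - (k+1) + 1 by omega] at g I
      obtain ⟨A, B, sb, x, h1, h2, h3, h4⟩ := ex_back hM nc (by omega) g I
      refine ⟨(A, B), fun _ => ⟨h3, h4, by simp⟩, fun _ => ⟨sb, x, ?_⟩⟩
      rw [show 2 * n - k = 2 * n - (k+1) + 1 by omega]
      exact ⟨h1, h2⟩
    · exact ⟨T, fun h => by omega, fun h => by omega⟩

theorem exists_max' {S : Finset ℕ} (h : S.Nonempty) : ∃ m ∈ S, ∀ a ∈ S, a ≤ m :=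
  ⟨S.max' h, S.max'_mem h, fun a ha => S.le_max' a ha⟩

theorem ex_fwd {i : ℕ} {tb sb : Bool} {A B : Finset ℕ} (g : Good i A B)
    (h1 : 0 ≤ (A.card : ℤ) - B.card + sgn sb)
    (h2 : (A.card : ℤ) - B.card + sgn sb ≤ A.card + B.card + sgn tb) :
    ∃ A' B' x, Stp (i+1) tb sb A B A' B' x ∧ Good (i+1) A' B' := by
  have hA : i + 1 ∉ A := fun h => by have := g.hA _ h; omega
  have hB : i + 1 ∉ B := fun h => by have := g.hB _ h; omega
  have hc := g.card_le
  cases tb <;> cases sb <;> simp [sgn] at h1 h2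
  · have hne : A.Nonempty := by rw [← Finset.card_pos]; omega
    obtain ⟨x, hx, hm⟩ := exists_max' hne
    have st : Stp (i+1) false false A B (A.erase x) B x := by
      refine Or.inr (Or.inr (Or.inl ⟨rfl, rfl, (Finset.insert_erase hx).symm, rfl, fun a ha => ?_⟩))
      have := hm a (Finset.mem_of_mem_erase ha)
      have := Finset.ne_of_mem_erase ha
      omega
    refine ⟨A.erase x, B, x, st, good_fwd g st ?_ fun _ => ⟨Finset.notMem_erase _ _, ?_⟩⟩
    · have := Finset.card_erase_add_one hx; omega
    · intro y hy
      intro hyB; exact absurd hyB (g.dj y (Finset.mem_of_mem_erase hy))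
  · have hne : B.Nonempty := by rw [← Finset.card_pos]; omega
    obtain ⟨y, hy, hm⟩ := exists_max' hne
    have hyA : y ∉ A := fun h => g.dj y h hy
    have hne2 : (A.filter (· ≤ y)).Nonempty := by
      rw [← Finset.card_pos]
      have e1 := g.bal y
      have e2 : 0 < cnt B y := by
        unfold cnt; rw [Finset.card_pos]; exact ⟨y, by simp [hy]⟩
      unfold cnt at e1 e2
      omega
    obtain ⟨x, hx, hmx⟩ := exists_max' hne2
    obtain ⟨hxA, hxy⟩ := Finset.mem_filter.1 hx
    have hxy' : x ≠ y := fun h => hyA (h ▸ hxA)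
    have hyA' : y ∉ A.erase x := fun h => hyA (Finset.mem_of_mem_erase h)
    have st : Stp (i+1) false true A B (insert y (A.erase x)) (B.erase y) x := by
      refine Or.inr (Or.inr (Or.inr ⟨rfl, rfl, y, Finset.mem_insert_self _ _, by omega,
        fun a ha => ?_, fun b hb => ?_, ?_, (Finset.insert_erase hy).symm⟩))
      · rcases Finset.mem_insert.1 ha with rfl | ha
        · exact Or.inr le_rfl
        · by_cases hay : a ≤ y
          · left
            have := hmx a (Finset.mem_filter.2 ⟨Finset.mem_of_mem_erase ha, hay⟩)
            have := Finset.ne_of_mem_erase ha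
            omega
          · right; omega
      · have := hm b (Finset.mem_of_mem_erase hb)
        have := Finset.ne_of_mem_erase hb
        omega
      · rw [Finset.erase_insert hyA', Finset.insert_erase hxA]
    refine ⟨_, _, x, st, good_fwd g st ?_ fun _ => ⟨?_, ?_⟩⟩
    · have e1 := Finset.card_erase_add_one hxA
      have e2 := Finset.card_erase_add_one hy
      rw [Finset.card_insert_of_notMem hyA']
      omega
    · simp [hxy']
    · intro z hz hzB
      rcases Finset.mem_insert.1 hz with rfl | hz
      · exact Finset.notMem_erase _ _
      · exact absurd hzB (g.dj z (Finset.mem_of_mem_erase hz))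
  · have st : Stp (i+1) true false A B A (insert (i+1) B) 0 := Or.inr (Or.inl ⟨rfl, rfl, rfl, rfl⟩)
    refine ⟨_, _, 0, st, good_fwd g st ?_ (by simp)⟩
    rw [Finset.card_insert_of_notMem hB]; omega
  · have st : Stp (i+1) true true A B (insert (i+1) A) B 0 := Or.inl ⟨rfl, rfl, rfl, rfl⟩
    refine ⟨_, _, 0, st, good_fwd g st ?_ (by simp)⟩
    rw [Finset.card_insert_of_notMem hA]; omega

theorem ex2 {n : ℕ} {t s : ℕ → Bool} {Ht Hs : ℕ → ℤ} (ht0 : Ht 0 = 0) (hs0 : Hs 0 = 0)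
    (ht : ∀ i < 2 * n, Ht (i+1) = Ht i + sgn (t i)) (hs : ∀ i < 2 * n, Hs (i+1) = Hs i + sgn (s i))
    (h0 : ∀ i ≤ 2 * n, 0 ≤ Hs i) (hle : ∀ i ≤ 2 * n, Hs i ≤ Ht i) (hend : Ht (2 * n) = 0) :
    ∃ M A B, MF n t M ∧ NC M ∧ Rel n t s M A B := by
  let P : ℕ → Finset ℕ × Finset ℕ → Prop := fun k T => k ≤ 2 * n →
    Good k T.1 T.2 ∧ (T.1.card : ℤ) + T.2.card = Ht k ∧ (T.1.card : ℤ) - T.2.card = Hs k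
  let Q : ℕ → Finset ℕ × Finset ℕ → Finset ℕ × Finset ℕ → Prop := fun k T T' => k < 2 * n →
    ∃ x, Stp (k+1) (t k) (s k) T.1 T.2 T'.1 T'.2 x
  have hP0 : ∃ a, P 0 a :=
    ⟨(∅, ∅), fun _ => ⟨⟨by simp, by simp, by simp, by simp [cnt]⟩, by simp [ht0], by simp [hs0]⟩⟩
  have hPs : ∀ k a, P k a → ∃ b, P (k+1) b ∧ Q k a b := by
    intro k T hP
    by_cases hk : k < 2 * n
    · obtain ⟨g, c1, c2⟩ := hP hk.le
      have e1 := ht k hk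
      have e2 := hs k hk
      have e3 := h0 (k+1) hk
      have e4 := hle (k+1) hk
      obtain ⟨A', B', x, st, g'⟩ := ex_fwd (tb := t k) (sb := s k) g (by omega) (by omega)
      obtain ⟨d1, d2⟩ := stp_card g g' st
      exact ⟨(A', B'), fun _ => ⟨g', by dsimp only; omega, by dsimp only; omega⟩, fun _ => ⟨x, st⟩⟩
    · exact ⟨T, fun h => by omega, fun h => by omega⟩
  obtain ⟨f, hP, hQ⟩ := exists_seq P Q hP0 hPs
  obtain ⟨A, hA⟩ : ∃ A : ℕ → Finset ℕ, ∀ i, A i = (f i).1 := ⟨_, fun _ => rfl⟩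
  obtain ⟨B, hB⟩ : ∃ B : ℕ → Finset ℕ, ∀ i, B i = (f i).2 := ⟨_, fun _ => rfl⟩
  have good : ∀ i ≤ 2 * n, Good i (A i) (B i) := fun i hi => by
    rw [hA, hB]; exact (hP i hi).1
  have hE : A (2 * n) = ∅ ∧ B (2 * n) = ∅ := by
    have := (hP (2*n) le_rfl).2.1
    rw [← Finset.card_eq_zero, ← Finset.card_eq_zero, hA, hB]
    omega
  have hst : ∀ i, ∃ x, i < 2 * n → Stp (i+1) (t i) (s i) (A i) (B i) (A (i+1)) (B (i+1)) x := by
    intro i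
    by_cases hi : i < 2 * n
    · obtain ⟨x, hx⟩ := hQ i hi
      rw [hA, hB, hA, hB]
      exact ⟨x, fun _ => hx⟩
    · exact ⟨0, fun h => absurd h hi⟩
  clear_value P Q
  clear hP0 hPs hP hQ hA hB
  choose x hst using hst
  let U : ℕ → ℕ → Prop := fun i v => v ∈ A i ∨ v ∈ B i
  have F3 : ∀ i ≤ 2 * n, ∀ v, U i v → 1 ≤ v ∧ v ≤ i := by
    rintro i hi v (h | h)
    · exact (good i hi).hA v h
    · exact (good i hi).hB v h
  have F1 : ∀ i < 2 * n, t i = true → ∀ v, U (i+1) v ↔ v = i + 1 ∨ U i v := by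
    intro i hi hti v
    rcases hst i hi with ⟨h, h', e1, e2⟩ | ⟨h, h', e1, e2⟩ | ⟨h, _⟩ | ⟨h, _⟩
    · simp only [U, e1, e2, Finset.mem_insert]; tauto
    · simp only [U, e1, e2, Finset.mem_insert]; tauto
    · simp [hti] at h
    · simp [hti] at h
  have F2 : ∀ i < 2 * n, t i = false → (∀ v, U i v ↔ v = x i ∨ U (i+1) v) ∧ ¬ U (i+1) (x i) := by
    intro i hi hti
    have g := good i hi.le
    rcases hst i hi with ⟨h, _⟩ | ⟨h, _⟩ | ⟨h, h', e1, e2, e3⟩ | ⟨h, h', y, hy, a1, a2, a3, e1, e2⟩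
    · simp [hti] at h
    · simp [hti] at h
    · constructor
      · intro v
        simp only [U, e1, e2, Finset.mem_insert]; tauto
      · rintro (h | h)
        · have := e3 _ h; omega
        · rw [← e2] at h
          exact g.dj (x i) (by rw [e1]; simp) h
    · constructor
      · intro v
        simp only [U, e1, e2, Finset.mem_insert, Finset.mem_erase]
        by_cases e : v = y
        · subst e; tauto
        · tauto
      · rintro (h | h)
        · have := a2 _ h; omega
        · exact g.dj (x i) (by rw [e1]; simp) (by rw [e2]; simp [h])
  have F4 : ∀ i ≤ 2 * n, ∀ v, U i v → t (v - 1) = true := by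
    intro i
    induction i with
    | zero => intro h v hv; have := F3 0 h v hv; omega
    | succ i ih =>
      intro hi v hv
      by_cases hti : t i = true
      · rcases (F1 i hi hti v).1 hv with rfl | h
        · simpa using hti
        · exact ih (by omega) v h
      · exact ih (by omega) v (((F2 i hi (by simpa using hti)).1 v).2 (Or.inr hv))
  have F5 : ∀ v k, v ≤ k → ¬ U k v → ∀ m, k ≤ m → m ≤ 2 * n → ¬ U m v := by
    intro v k hvk hU m hkm
    induction m, hkm using Nat.le_induction with
    | base => intro _; exact hU
    | succ m hkm ih =>
      intro hm hv
      have ih := ih (by omega)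
      by_cases hti : t m = true
      · rcases (F1 m hm hti v).1 hv with rfl | h
        · omega
        · exact ih h
      · exact ih (((F2 m hm (by simpa using hti)).1 v).2 (Or.inr hv))
  have Fx : ∀ i < 2 * n, t i = false → U i (x i) := fun i hi h => ((F2 i hi h).1 _).2 (Or.inl rfl)
  let M : Finset (ℕ × ℕ) := ((Finset.range (2 * n)).filter (fun i => t i = false)).image
    (fun i => (x i, i + 1))
  have memM : ∀ {a c}, (a, c) ∈ M ↔ ∃ i, i < 2 * n ∧ t i = false ∧ x i = a ∧ i + 1 = c := by
    intro a c
    simp [M, and_assoc]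
  clear_value M
  have hM : MF n t M := by
    refine ⟨?_, ?_, ?_, ?_, ?_, ?_⟩
    · intro a c h
      obtain ⟨i, hi, hti, rfl, rfl⟩ := memM.1 h
      have := F3 i hi.le _ (Fx i hi hti)
      omega
    · have aux : ∀ i i', i < i' → i' < 2 * n → t i = false → t i' = false → x i ≠ x i' := by
        intro i i' h h' a a' e
        have e1 := F3 i (by omega) _ (Fx i (by omega) a)
        have e2 := F5 (x i) (i+1) (by omega) (F2 i (by omega) a).2 i' (by omega) (by omega)
        rw [e] at e2
        exact e2 (Fx i' h' a')
      intro a c d h h'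
      obtain ⟨i, hi, hti, e1, rfl⟩ := memM.1 h
      obtain ⟨i', hi', hti', e2, rfl⟩ := memM.1 h'
      rcases lt_trichotomy i i' with h | rfl | h
      · exact absurd (e1.trans e2.symm) (aux i i' h hi' hti hti')
      · rfl
      · exact absurd (e2.trans e1.symm) (aux i' i h hi hti' hti)
    · intro a c d h h'
      obtain ⟨i, hi, hti, rfl, rfl⟩ := memM.1 h
      obtain ⟨i', hi', hti', rfl, e⟩ := memM.1 h'
      obtain rfl : i' = i := by omega
      rfl
    · intro a c d h h'
      obtain ⟨i, hi, hti, rfl, rfl⟩ := memM.1 h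
      obtain ⟨i', hi', hti', e, rfl⟩ := memM.1 h'
      have := F4 i' hi'.le _ (Fx i' hi' hti')
      rw [e] at this
      simp [hti] at this
    · intro i hi hti
      by_contra hno
      have : ∀ m, i + 1 ≤ m → m ≤ 2 * n → U m (i+1) := by
        intro m hm
        induction m, hm using Nat.le_induction with
        | base => intro _; exact (F1 i hi hti _).2 (Or.inl rfl)
        | succ m hm ih =>
          intro hm2
          have ih := ih (by omega)
          by_cases htm : t m = true
          · exact (F1 m hm2 htm _).2 (Or.inr ih)
          · have htm : t m = false := by simpa using htm
            rcases ((F2 m hm2 htm).1 _).1 ih with h | h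
            · exact absurd ⟨m + 1, memM.2 ⟨m, hm2, htm, h.symm, rfl⟩⟩ hno
            · exact h
      have := this (2 * n) hi le_rfl
      simp [U, hE.1, hE.2] at this
    · intro i hi hti
      exact ⟨x i, memM.2 ⟨i, hi, hti, rfl, rfl⟩⟩
  have hxM : ∀ i < 2 * n, t i = false → (x i, i+1) ∈ M := fun i hi h => memM.2 ⟨i, hi, h, rfl, rfl⟩
  have hI : ∀ k ≤ 2 * n, Inv (2 * n - k) (A (2 * n - k)) (B (2 * n - k)) M := by
    intro k
    induction k with
    | zero =>
      intro _
      simp only [Nat.sub_zero, hE.1, hE.2]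
      constructor
      · intro v
        constructor
        · simp
        · rintro ⟨c, hc, _, h⟩
          have := hM.lt hc
          omega
      · intro v N
        constructor
        · simp
        · rintro ⟨y, cy, z, cz, c1, c2, c3, c4, c5, c6, c7, c8, c9⟩
          have := hM.lt c1
          omega
    | succ k ih =>
      intro hk
      have ih := ih (by omega)
      rw [show 2 * n - k = 2 * n - (k+1) + 1 by omega] at ih
      have hi : 2 * n - (k+1) < 2 * n := by omega
      have g := good (2 * n - (k+1)) hi.le
      exact inv_back hM hi ih (hst _ hi)
        (fun _ => ⟨fun h => by have := g.hA _ h; omega, fun h => by have := g.hB _ h; omega⟩)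
        (hxM _ hi)
  refine ⟨M, A, B, hM, ?_, good, hE.1, hE.2, fun i hi => ⟨x i, hst i hi, hxM i hi⟩⟩
  rintro ⟨a, ca, y, cy, z, cz, m1, m2, m3, l1, l2, l3, l4, l5⟩
  obtain ⟨i, hi, hti, rfl, rfl⟩ := memM.1 m1
  have I := hI (2 * n - (i+1)) (by omega)
  rw [show 2 * n - (2 * n - (i+1)) = i + 1 by omega] at I
  obtain ⟨y', hy', z', hz', b1, b2, b3⟩ := (I.cr (x i) z).2
    ⟨y, cy, z, cz, m2, m3, by omega, by omega, l4, l5, l1, l2, le_rfl⟩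
  rcases hst i hi with ⟨h, _⟩ | ⟨h, _⟩ | ⟨h, h', e1, e2, e3⟩ | ⟨h, h', y, hy, a1, a2, a3, e1, e2⟩
  · simp [hti] at h
  · simp [hti] at h
  · have := e3 _ hy'; omega
  · have := a2 _ hy'; have := a3 _ hz'; omega

theorem sgn_true : sgn true = 1 := rfl
theorem sgn_false : sgn false = -1 := rfl

theorem pathHeight_succ (t : List Bool) (i : ℕ) (hi : i < t.length) :
    pathHeight t (i+1) = pathHeight t i + sgn (t.getD i false) := by
  unfold pathHeight
  have hg : t.getD i false = t[i] := by simp [hi]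
  rw [hg, List.take_succ_eq_append_getElem hi, List.count_append, List.count_append]
  cases h : t[i] <;> simp [sgn] <;> ring

theorem pathHeight_end {n : ℕ} {t : List Bool} (hl : t.length = 2 * n) :
    pathHeight t (2 * n) = 2 * (t.count true : ℤ) - 2 * n := by
  unfold pathHeight
  rw [List.take_of_length_le hl.le]
  have := List.count_true_add_count_false t
  omega

theorem pathHeight_big {n : ℕ} {t : List Bool} (hl : t.length = 2 * n) {i : ℕ} (hi : 2 * n ≤ i) :
    pathHeight t i = pathHeight t (2 * n) := by
  unfold pathHeight
  rw [List.take_of_length_le hl.le, List.take_of_length_le (by omega)]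

theorem ext_getD {n : ℕ} {s s' : List Bool} (h : s.length = 2 * n) (h' : s'.length = 2 * n)
    (e : ∀ i < 2 * n, s.getD i false = s'.getD i false) : s = s' := by
  apply List.ext_getElem (h.trans h'.symm)
  intro i h1 h2
  have := e i (by omega)
  simpa [h1, h2] using this

theorem Rel.heights {n : ℕ} {t s : List Bool} {M : Finset (ℕ × ℕ)} {A B : ℕ → Finset ℕ}
    (hl : t.length = 2 * n) (hl' : s.length = 2 * n)
    (r : Rel n (fun i => t.getD i false) (fun i => s.getD i false) M A B) :
    ∀ i ≤ 2 * n, ((A i).card : ℤ) + (B i).card = pathHeight t i ∧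
      ((A i).card : ℤ) - (B i).card = pathHeight s i := by
  intro i
  induction i with
  | zero =>
    intro h
    have g := r.good 0 h
    have h1 : A 0 = ∅ := by
      apply Finset.eq_empty_of_forall_notMem; intro a ha; have := g.hA a ha; omega
    have h2 : B 0 = ∅ := by
      apply Finset.eq_empty_of_forall_notMem; intro a ha; have := g.hB a ha; omega
    simp [h1, h2, pathHeight]
  | succ i ih =>
    intro hi
    obtain ⟨i1, i2⟩ := ih (by omega)
    obtain ⟨x, st, _⟩ := r.step i hi
    obtain ⟨c1, c2⟩ := stp_card (r.good i (by omega)) (r.good (i+1) hi) st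
    rw [pathHeight_succ t i (by omega), pathHeight_succ s i (by omega)]
    constructor <;> linarith

theorem mf_of {n : ℕ} {M : Finset (ℕ × ℕ)} (h : IsPerfectMatching n M) :
    MF n (fun i => (shapeOf n M).getD i false) M := by
  obtain ⟨h1, h2⟩ := h
  have lt : ∀ {a c}, (a, c) ∈ M → a < c ∧ 1 ≤ a ∧ c ≤ 2 * n := fun h => h1 _ h
  have uq : ∀ v, 1 ≤ v → v ≤ 2 * n → ∀ p q, p ∈ M → q ∈ M → (p.1 = v ∨ p.2 = v) →
      (q.1 = v ∨ q.2 = v) → p = q := fun v a b p q hp hq hpv hqv =>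
    (h2 v a b).unique ⟨hp, hpv⟩ ⟨hq, hqv⟩
  have hs : ∀ i < 2 * n, ((shapeOf n M).getD i false = true ↔ ∃ c, (i+1, c) ∈ M) := by
    intro i hi
    simp [shapeOf, hi]
  refine ⟨lt, ?_, ?_, ?_, ?_, ?_⟩
  · intro a c d h h'
    have := lt h
    have := uq a (by omega) (by omega) _ _ h h' (Or.inl rfl) (Or.inl rfl)
    simpa using this
  · intro a c d h h'
    have := lt h
    have := uq d (by omega) (by omega) _ _ h h' (Or.inr rfl) (Or.inr rfl)
    simpa using this
  · intro a c d h h'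
    have l := lt h
    have := uq c (by omega) (by omega) _ _ h h' (Or.inr rfl) (Or.inl rfl)
    simp at this
    omega
  · intro i hi ht
    exact (hs i hi).1 ht
  · intro i hi ht
    obtain ⟨⟨a, c⟩, ⟨hp, hv⟩, _⟩ := h2 (i+1) (by omega) (by omega)
    rcases hv with hv | hv
    · simp only at hv
      subst hv
      have := (hs i hi).2 ⟨c, hp⟩
      rw [this] at ht
      simp at ht
    · simp only at hv
      subst hv
      exact ⟨a, hp⟩

theorem of_mf {n : ℕ} {t : List Bool} (hl : t.length = 2 * n) {M : Finset (ℕ × ℕ)}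
    (h : MF n (fun i => t.getD i false) M) : IsPerfectMatching n M ∧ shapeOf n M = t := by
  refine ⟨⟨fun p hp => h.lt hp, ?_⟩, ?_⟩
  · intro v h1 h2
    obtain ⟨i, rfl⟩ : ∃ i, v = i + 1 := ⟨v - 1, by omega⟩
    cases ht : t.getD i false with
    | true =>
      obtain ⟨c, hc⟩ := h.op i (by omega) ht
      refine ⟨(i+1, c), ⟨hc, Or.inl rfl⟩, ?_⟩
      rintro ⟨a, d⟩ ⟨hp, hv | hv⟩
      · simp only at hv
        subst hv
        rw [h.u1 hc hp]
      · simp only at hv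
        subst hv
        exact (h.u3 hp hc).elim
    | false =>
      obtain ⟨c, hc⟩ := h.cl i (by omega) ht
      refine ⟨(c, i+1), ⟨hc, Or.inr rfl⟩, ?_⟩
      rintro ⟨a, d⟩ ⟨hp, hv | hv⟩
      · simp only at hv
        subst hv
        exact (h.u3 hc hp).elim
      · simp only at hv
        subst hv
        rw [h.u2 hc hp]
  · apply ext_getD (n := n) (by simp [shapeOf]) hl
    intro i hi
    have hs : ((shapeOf n M).getD i false = true ↔ ∃ c, (i+1, c) ∈ M) := by
      simp [shapeOf, hi]
    cases ht : t.getD i false with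
    | true => exact hs.2 (h.op i hi ht)
    | false =>
      rw [Bool.eq_false_iff]
      intro h'
      obtain ⟨c, hc⟩ := hs.1 h'
      obtain ⟨a, ha⟩ := h.cl i hi ht
      exact h.u3 ha hc

theorem avoids_iff (M : Finset (ℕ × ℕ)) : MatchAvoids p321 M ↔ NC M := by
  unfold MatchAvoids NC
  apply not_congr
  constructor
  · rintro ⟨f, hf, h⟩
    have e0 := h 0
    have e1 := h 1
    have e2 := h 2
    refine ⟨_, _, _, _, _, _, e0, e1, e2, hf ?_, hf ?_, hf ?_, hf ?_, hf ?_⟩ <;> decide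
  · rintro ⟨x, cx, y, cy, z, cz, m1, m2, m3, l1, l2, l3, l4, l5⟩
    refine ⟨![x, y, z, cx, cy, cz], ?_, ?_⟩
    · rw [Fin.strictMono_iff_lt_succ (n := 5)]
      intro i
      fin_cases i <;> simp <;> assumption
    · intro a
      fin_cases a
      · exact m1
      · exact m2
      · exact m3

end M321

/-- For every positive `n` and every Ferrers board `F ∈ F_n`
(given by its border Dyck path `t`), the number of `321`-avoiding perfect matchings
of shape `F` equals the number of Dyck paths of semilength `n` lying weakly below `t`. -/
theorem card_matchings321_of_shape_eq_card_paths_below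
    (n : ℕ) (hn : 0 < n) (t : List Bool) (ht : IsDyckPath n t) :
    {M : Finset (ℕ × ℕ) | IsPerfectMatching n M ∧ MatchAvoids p321 M ∧ shapeOf n M = t}.ncard =
    {s : List Bool | IsDyckPath n s ∧ WeaklyBelow s t}.ncard := by
  classical
  obtain ⟨tl, tc, tp⟩ := ht
  have tend : pathHeight t (2 * n) = 0 := by rw [M321.pathHeight_end tl, tc]; ring
  have h1 : ∀ M, (IsPerfectMatching n M ∧ MatchAvoids p321 M ∧ shapeOf n M = t) →
      ∃ s : List Bool, (IsDyckPath n s ∧ WeaklyBelow s t) ∧ ∃ A B,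
        M321.Rel n (fun i => t.getD i false) (fun i => s.getD i false) M A B := by
    rintro M ⟨hM, hav, hsh⟩
    have mf := M321.mf_of hM
    rw [hsh] at mf
    obtain ⟨σ, A, B, r⟩ := M321.ex1 mf ((M321.avoids_iff M).1 hav)
    let s : List Bool := (List.range (2 * n)).map σ
    have sl : s.length = 2 * n := by simp [s]
    have r' : M321.Rel n (fun i => t.getD i false) (fun i => s.getD i false) M A B := by
      refine ⟨r.good, r.endA, r.endB, fun i hi => ?_⟩
      have : s.getD i false = σ i := by simp [s, hi]
      rw [this]
      exact r.step i hi
    have hh := M321.Rel.heights tl sl r'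
    have hend : pathHeight s (2 * n) = 0 := by
      have := (hh (2 * n) le_rfl).2
      rw [r.endA, r.endB] at this
      simpa using this.symm
    have hnn : ∀ i, 0 ≤ pathHeight s i := by
      intro i
      by_cases hi : i ≤ 2 * n
      · have e1 := (hh i hi).2
        have e2 := (r.good i hi).card_le
        omega
      · rw [M321.pathHeight_big sl (by omega), hend]
    refine ⟨s, ⟨⟨sl, ?_, ?_⟩, ?_⟩, A, B, r'⟩
    · rw [M321.pathHeight_end sl] at hend
      omega
    · intro i
      have := hnn i
      unfold pathHeight at this
      omega
    · intro i
      by_cases hi : i ≤ 2 * n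
      · have e1 := hh i hi
        omega
      · rw [M321.pathHeight_big sl (by omega), M321.pathHeight_big tl (by omega), hend, tend]
  have h2 : ∀ s : List Bool, (IsDyckPath n s ∧ WeaklyBelow s t) → ∃ M,
      (IsPerfectMatching n M ∧ MatchAvoids p321 M ∧ shapeOf n M = t) ∧ ∃ A B,
        M321.Rel n (fun i => t.getD i false) (fun i => s.getD i false) M A B := by
    rintro s ⟨⟨sl, sc, sp⟩, hb⟩
    obtain ⟨M, A, B, mf, nc, r⟩ := M321.ex2 (n := n) (t := fun i => t.getD i false)
      (s := fun i => s.getD i false) (Ht := pathHeight t) (Hs := pathHeight s)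
      (by simp [pathHeight]) (by simp [pathHeight])
      (fun i hi => M321.pathHeight_succ t i (by omega))
      (fun i hi => M321.pathHeight_succ s i (by omega))
      (fun i _ => by have := sp i; unfold pathHeight; omega) (fun i _ => hb i) tend
    obtain ⟨a, b⟩ := M321.of_mf tl mf
    exact ⟨M, ⟨a, (M321.avoids_iff M).2 nc, b⟩, A, B, r⟩
  choose F hF hFr using h1
  refine Set.ncard_congr F hF ?_ ?_
  · intro M M' hM hM' e
    obtain ⟨A, B, r⟩ := hFr M hM
    obtain ⟨A', B', r'⟩ := hFr M' hM'
    rw [← e] at r'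
    have mf := M321.mf_of hM.1
    have mf' := M321.mf_of hM'.1
    rw [hM.2.2] at mf
    rw [hM'.2.2] at mf'
    exact Finset.Subset.antisymm (M321.Rel.M_sub mf r r') (M321.Rel.M_sub mf' r' r)
  · intro s hs
    obtain ⟨M, hM, A, B, r⟩ := h2 s hs
    refine ⟨M, hM, ?_⟩
    obtain ⟨A', B', r'⟩ := hFr M hM
    have mf := M321.mf_of hM.1
    rw [hM.2.2] at mf
    exact M321.ext_getD (hF M hM).1.1 hs.1.1 (M321.Rel.s_unique mf r' r)
end

section
/- For every positive integer n and every Ferrers board F in F_n, the number of 213-avoiding perfect matchings of shape F equals the number of Dyck paths of semilength n that lie weakly below the border path D_F of F. (In the paper this is realized by an explicit bijection Δ_213 : M_F(213) → D²_F.) -/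
/-! ### Proof -/

/-- The common count. -/
def cnt213 : List Bool → ℕ → ℕ → ℕ
  | [], _, h => if h = 0 then 1 else 0
  | true :: t, p, h => cnt213 t p (h + 1)
  | false :: t, p, h => ∑ i ∈ Finset.range h, if p ≤ i + 1 then cnt213 t i (h - 1) else 0

theorem ph_nil (i : ℕ) : pathHeight [] i = 0 := by simp [pathHeight]
theorem ph_zero (l : List Bool) : pathHeight l 0 = 0 := by simp [pathHeight]
theorem ph_true (l : List Bool) (i : ℕ) :
    pathHeight (true :: l) (i + 1) = pathHeight l i + 1 := by
  simp [pathHeight]; ring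
theorem ph_false (l : List Bool) (i : ℕ) :
    pathHeight (false :: l) (i + 1) = pathHeight l i - 1 := by
  simp [pathHeight]; ring

theorem ph_le (l : List Bool) (i : ℕ) : pathHeight l i ≤ i := by
  induction l generalizing i with
  | nil => simp [ph_nil]
  | cons b l ih =>
    cases i with
    | zero => simp [ph_zero]
    | succ i =>
      have := ih i
      cases b
      · rw [ph_false]; push_cast; omega
      · rw [ph_true]; push_cast; omega

theorem ph_rep (k : ℕ) (t : List Bool) (i : ℕ) :
    (i ≤ k → pathHeight (List.replicate k true ++ t) i = i) ∧
    (k ≤ i → pathHeight (List.replicate k true ++ t) i = k + pathHeight t (i - k)) := by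
  induction k generalizing i with
  | zero =>
    constructor
    · intro h
      have : i = 0 := by omega
      subst this; simp [ph_zero]
    · intro _; simp
  | succ k ih =>
    cases i with
    | zero => simp [ph_zero]
    | succ i =>
      rw [List.replicate_succ, List.cons_append, ph_true]
      obtain ⟨h1, h2⟩ := ih i
      constructor
      · intro h; rw [h1 (by omega)]; push_cast; rfl
      · intro h; rw [h2 (by omega)]
        have : i + 1 - (k + 1) = i - k := by omega
        rw [this]; push_cast; ring

def PB (p : ℕ) (T u : List Bool) : Prop :=
  u.length = T.length ∧ (∀ i, 0 ≤ (p : ℤ) + pathHeight u i) ∧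
    (p : ℤ) + pathHeight u u.length = 0 ∧ ∀ i, pathHeight u i ≤ pathHeight T i

theorem pb_false (p k : ℕ) (t u : List Bool) :
    PB p (List.replicate k true ++ false :: t) (false :: u) ↔
      ∃ p', p = p' + 1 ∧ PB p' (List.replicate k true ++ t) u := by
  have key : (∀ i, pathHeight (false :: u) i
        ≤ pathHeight (List.replicate k true ++ false :: t) i) ↔
      ∀ i, pathHeight u i ≤ pathHeight (List.replicate k true ++ t) i := by
    constructor
    · intro h i
      rcases le_total i k with hi | hi
      · rw [(ph_rep k t i).1 hi]; exact ph_le _ _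
      · have := h (i + 1)
        rw [ph_false, (ph_rep k (false :: t) (i + 1)).2 (by omega)] at this
        rw [(ph_rep k t i).2 hi]
        have e : i + 1 - k = (i - k) + 1 := by omega
        rw [e, ph_false] at this
        omega
    · intro h i
      rcases i with _ | i
      · simp [ph_zero]
      rcases le_or_gt (i + 1) k with hi | hi
      · rw [(ph_rep k _ _).1 hi]; exact ph_le _ _
      · have := h i
        rw [(ph_rep k t i).2 (by omega)] at this
        rw [ph_false, (ph_rep k (false :: t) (i + 1)).2 (by omega)]
        have e : i + 1 - k = (i - k) + 1 := by omega
        rw [e, ph_false]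
        omega
  unfold PB
  rw [key]
  constructor
  · rintro ⟨h1, h2, h3, h4⟩
    have h20 := h2 1
    rw [show (1:ℕ) = 0 + 1 from rfl, ph_false, ph_zero] at h20
    refine ⟨p - 1, by omega, by simp at h1 ⊢; omega, ?_, ?_, h4⟩
    · intro i
      have := h2 (i + 1)
      rw [ph_false] at this
      omega
    · rw [List.length_cons, ph_false] at h3
      omega
  · rintro ⟨p', rfl, h1, h2, h3, h4⟩
    refine ⟨by simp at h1 ⊢; omega, ?_, ?_, h4⟩
    · intro i
      rcases i with _ | i
      · rw [ph_zero]; omega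
      · rw [ph_false]; have := h2 i; push_cast; omega
    · rw [List.length_cons, ph_false]; push_cast; omega

theorem pb_true (p : ℕ) (T u : List Bool) :
    PB p (true :: T) (true :: u) ↔ PB (p + 1) T u := by
  unfold PB
  constructor
  · rintro ⟨h1, h2, h3, h4⟩
    refine ⟨by simpa using h1, ?_, ?_, ?_⟩
    · intro i
      have := h2 (i + 1)
      rw [ph_true] at this
      push_cast; omega
    · rw [List.length_cons, ph_true] at h3
      push_cast; omega
    · intro i
      have := h4 (i + 1)
      rw [ph_true, ph_true] at this
      omega
  · rintro ⟨h1, h2, h3, h4⟩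
    refine ⟨by simpa using h1, ?_, ?_, ?_⟩
    · intro i
      rcases i with _ | i
      · rw [ph_zero]; omega
      · rw [ph_true]; have := h2 i; push_cast at this; omega
    · rw [List.length_cons, ph_true]; push_cast at h3; omega
    · intro i
      rcases i with _ | i
      · simp [ph_zero]
      · rw [ph_true, ph_true]; have := h4 i; omega

theorem pb_true_false (p : ℕ) (T u : List Bool) : ¬ PB p (false :: T) (true :: u) := by
  rintro ⟨_, _, _, h4⟩
  have := h4 1
  rw [show (1:ℕ) = 0 + 1 from rfl, ph_true, ph_false, ph_zero, ph_zero] at this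
  omega

theorem pb_nil (p : ℕ) (b : Bool) (T : List Bool) : ¬ PB p (b :: T) [] := by
  rintro ⟨h, _⟩
  simp at h

theorem cnt_step0 (t : List Bool) (h : ℕ) :
    cnt213 (false :: t) 0 h = cnt213 (false :: t) 1 h := by
  simp [cnt213]

theorem cnt_step (t : List Bool) (p h : ℕ) (hp : p < h) :
    cnt213 (false :: t) (p + 1) h = cnt213 t p (h - 1) + cnt213 (false :: t) (p + 2) h := by
  simp only [cnt213]
  have : ∀ i ∈ Finset.range h, (if p + 1 ≤ i + 1 then cnt213 t i (h - 1) else 0) =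
      (if p = i then cnt213 t i (h - 1) else 0) +
      (if p + 2 ≤ i + 1 then cnt213 t i (h - 1) else 0) := by
    intro i _
    split_ifs <;> omega
  rw [Finset.sum_congr rfl this, Finset.sum_add_distrib, Finset.sum_ite_eq]
  simp [hp]

theorem cnt_last (t : List Bool) (h : ℕ) : cnt213 (false :: t) (h + 1) h = 0 := by
  simp only [cnt213]
  apply Finset.sum_eq_zero
  intro i hi
  have := Finset.mem_range.1 hi
  rw [if_neg (by omega)]

theorem path_count (t : List Bool) : ∀ p k : ℕ, (p : ℤ) + k + pathHeight t t.length = 0 →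
    ∃ F : Finset (List Bool), (∀ u, u ∈ F ↔ PB p (List.replicate k true ++ t) u) ∧
      F.card = cnt213 t p (p + k) := by
  induction t with
  | nil =>
    intro p k h
    rw [ph_nil] at h
    have hp : p = 0 := by omega
    have hk : k = 0 := by omega
    subst hp hk
    refine ⟨{[]}, ?_, by simp [cnt213]⟩
    intro u
    simp only [Finset.mem_singleton, PB]
    constructor
    · rintro rfl; simp [ph_nil]
    · rintro ⟨h, _⟩; simpa using h
  | cons b t ih =>
    cases b with
    | true =>
      intro p k h
      rw [List.length_cons, ph_true] at h
      obtain ⟨F, h1, h2⟩ := ih p (k + 1) (by push_cast; omega)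
      refine ⟨F, ?_, by rw [h2]; rfl⟩
      intro u
      rw [h1, List.replicate_succ']
      simp
    | false =>
      intro p k
      induction k generalizing p with
      | zero =>
        intro h
        rw [List.length_cons, ph_false] at h
        cases p with
        | zero =>
          refine ⟨∅, ?_, by simp [cnt213]⟩
          intro u
          simp only [Finset.notMem_empty, false_iff]
          intro hu
          rcases u with _ | ⟨b, u⟩
          · exact pb_nil _ _ _ hu
          cases b
          · obtain ⟨p', h, _⟩ := (pb_false 0 0 t u).1 hu
            omega
          · exact pb_true_false _ _ _ hu
        | succ p =>
          obtain ⟨F, h1, h2⟩ := ih p 0 (by push_cast at h ⊢; omega)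
          refine ⟨F.map ⟨List.cons false, List.cons_injective⟩, ?_, ?_⟩
          · intro u
            simp only [Finset.mem_map, Function.Embedding.coeFn_mk]
            constructor
            · rintro ⟨u, hu, rfl⟩
              exact (pb_false _ _ _ _).2 ⟨p, rfl, (h1 u).1 hu⟩
            · intro hu
              rcases u with _ | ⟨b, u⟩
              · exact (pb_nil _ _ _ hu).elim
              cases b
              · obtain ⟨p', h, h'⟩ := (pb_false _ 0 t u).1 hu
                have : p' = p := by omega
                subst this
                exact ⟨u, (h1 u).2 h', rfl⟩
              · exact (pb_true_false _ _ _ hu).elim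
          · rw [Finset.card_map, h2]
            simp only [add_zero]
            rw [cnt_step t p (p + 1) (by omega), cnt_last]
            simp
      | succ k ihk =>
        intro h
        obtain ⟨F, h1, h2⟩ := ihk (p + 1) (by push_cast at h ⊢; omega)
        rw [List.length_cons, ph_false] at h
        cases p with
        | zero =>
          refine ⟨F.map ⟨List.cons true, List.cons_injective⟩, ?_, ?_⟩
          · intro u
            simp only [Finset.mem_map, Function.Embedding.coeFn_mk]
            constructor
            · rintro ⟨u, hu, rfl⟩
              rw [List.replicate_succ, List.cons_append, pb_true]
              exact (h1 u).1 hu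
            · intro hu
              rcases u with _ | ⟨b, u⟩
              · exact (pb_nil _ _ _ hu).elim
              cases b
              · obtain ⟨p', h, h'⟩ := (pb_false _ _ t u).1 hu
                omega
              · rw [List.replicate_succ, List.cons_append, pb_true] at hu
                exact ⟨u, (h1 u).2 hu, rfl⟩
          · rw [Finset.card_map, h2, cnt_step0]
            congr 1; omega
        | succ p =>
          obtain ⟨F', h1', h2'⟩ := ih p (k + 1) (by push_cast at h ⊢; omega)
          refine ⟨F'.map ⟨List.cons false, List.cons_injective⟩ ∪
            F.map ⟨List.cons true, List.cons_injective⟩, ?_, ?_⟩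
          · intro u
            simp only [Finset.mem_union, Finset.mem_map, Function.Embedding.coeFn_mk]
            constructor
            · rintro (⟨u, hu, rfl⟩ | ⟨u, hu, rfl⟩)
              · exact (pb_false _ _ _ _).2 ⟨p, rfl, (h1' u).1 hu⟩
              · rw [List.replicate_succ, List.cons_append, pb_true]
                exact (h1 u).1 hu
            · intro hu
              rcases u with _ | ⟨b, u⟩
              · exact (pb_nil _ _ _ hu).elim
              cases b
              · obtain ⟨p', h, h'⟩ := (pb_false _ _ t u).1 hu
                have : p' = p := by omega
                subst this
                exact Or.inl ⟨u, (h1' u).2 h', rfl⟩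
              · rw [List.replicate_succ, List.cons_append, pb_true] at hu
                exact Or.inr ⟨u, (h1 u).2 hu, rfl⟩
          · rw [Finset.card_union_of_disjoint, Finset.card_map, Finset.card_map, h2, h2',
              cnt_step t p _ (by omega)]
            · congr 2 <;> omega
            · rw [Finset.disjoint_left]
              intro u hu hu'
              simp only [Finset.mem_map, Function.Embedding.coeFn_mk] at hu hu'
              obtain ⟨v, _, rfl⟩ := hu
              obtain ⟨w, _, hw⟩ := hu'
              simp at hw

/-! Matchings -/

/-- Positions of the steps of kind `b` of `t`, numbered from `x`. -/
def posOf (b : Bool) : ℕ → List Bool → Finset ℕ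
  | _, [] => ∅
  | x, c :: t => if c = b then insert x (posOf b (x + 1) t) else posOf b (x + 1) t

theorem mem_posOf (b : Bool) (t : List Bool) (x y : ℕ) :
    y ∈ posOf b x t ↔ ∃ i, t[i]? = some b ∧ y = x + i := by
  induction t generalizing x with
  | nil => simp [posOf]
  | cons c t ih =>
    have : (∃ i, (c :: t)[i]? = some b ∧ y = x + i) ↔
        (c = b ∧ y = x) ∨ ∃ i, t[i]? = some b ∧ y = x + 1 + i := by
      constructor
      · rintro ⟨i, h, rfl⟩
        rcases i with _ | i
        · left; simpa using h
        · right; exact ⟨i, by simpa using h, by omega⟩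
      · rintro (⟨rfl, rfl⟩ | ⟨i, h, rfl⟩)
        · exact ⟨0, by simp⟩
        · exact ⟨i + 1, by simpa using h, by omega⟩
    rw [this, posOf, ← ih]
    split_ifs with h <;> simp [h]

structure GoodM (O C : Finset ℕ) (q : ℕ) (M : Finset (ℕ × ℕ)) : Prop where
  mem : ∀ a c, (a, c) ∈ M → a ∈ O ∧ c ∈ C ∧ a < c
  exO : ∀ a ∈ O, ∃ c, (a, c) ∈ M
  exC : ∀ c ∈ C, ∃ a, (a, c) ∈ M
  unO : ∀ a c c', (a, c) ∈ M → (a, c') ∈ M → c = c'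
  unC : ∀ a a' c, (a, c) ∈ M → (a', c) ∈ M → a = a'
  av : ∀ a b c a' b' c', (a, a') ∈ M → (b, b') ∈ M → (c, c') ∈ M → a < b → b < c →
    c' < a' → ¬ a' < b'
  fr : ∀ a b a' b', (a, a') ∈ M → (b, b') ∈ M → a < b → b < q → b' < a'

theorem good_close (L O C : Finset ℕ) (q x : ℕ) (hL : ∀ y ∈ L, y < x) (hO : ∀ y ∈ O, x < y)
    (hC : ∀ y ∈ C, x < y) (hq : q ≤ x) (M : Finset (ℕ × ℕ)) :
    GoodM (L ∪ O) (insert x C) q M ↔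
      ∃ o ∈ L, (∀ y ∈ L, y < q → y ≤ o) ∧ ∃ M', GoodM (L.erase o ∪ O) C o M' ∧
        insert (o, x) M' = M := by
  constructor
  · intro h
    obtain ⟨o, ho⟩ := h.exC x (by simp)
    have hox := (h.mem _ _ ho).2.2
    have hoL : o ∈ L := by
      rcases Finset.mem_union.1 (h.mem _ _ ho).1 with h' | h'
      · exact h'
      · have := hO _ h'; omega
    have hbig : ∀ a c, (a, c) ∈ M → a ≠ o → c ∈ C := by
      intro a c hac hne
      rcases Finset.mem_insert.1 (h.mem _ _ hac).2.1 with rfl | h'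
      · exact (hne (h.unC _ _ _ hac ho)).elim
      · exact h'
    refine ⟨o, hoL, ?_, M.erase (o, x), ?_, Finset.insert_erase ho⟩
    · intro y hy hyq
      by_contra hlt
      push Not at hlt
      obtain ⟨y', hy'⟩ := h.exO y (Finset.mem_union_left _ hy)
      have h1 := h.fr _ _ _ _ ho hy' hlt hyq
      have h2 := hC _ (hbig _ _ hy' (by omega))
      omega
    · have hsub : ∀ a c, (a, c) ∈ M.erase (o, x) → (a, c) ∈ M ∧ a ≠ o := by
        intro a c hac
        obtain ⟨h1, h2⟩ := Finset.mem_erase.1 hac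
        refine ⟨h2, ?_⟩
        rintro rfl
        exact h1 (by rw [h.unO _ _ _ h2 ho])
      refine ⟨?_, ?_, ?_, ?_, ?_, ?_, ?_⟩
      · intro a c hac
        obtain ⟨h1, h2⟩ := hsub _ _ hac
        refine ⟨?_, hbig _ _ h1 h2, (h.mem _ _ h1).2.2⟩
        have := (h.mem _ _ h1).1
        simp only [Finset.mem_union, Finset.mem_erase] at this ⊢
        tauto
      · intro a ha
        have hne : a ≠ o := by
          rintro rfl
          simp at ha
          have := hO _ ha
          omega
        have : a ∈ L ∪ O := by
          simp only [Finset.mem_union, Finset.mem_erase] at ha ⊢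
          tauto
        obtain ⟨c, hc⟩ := h.exO a this
        exact ⟨c, Finset.mem_erase.2 ⟨by simp [hne], hc⟩⟩
      · intro c hc
        obtain ⟨a, ha⟩ := h.exC c (Finset.mem_insert_of_mem hc)
        have := hC _ hc
        exact ⟨a, Finset.mem_erase.2 ⟨by simp; omega, ha⟩⟩
      · intro a c c' h1 h2
        exact h.unO _ _ _ (hsub _ _ h1).1 (hsub _ _ h2).1
      · intro a c c' h1 h2
        exact h.unC _ _ _ (hsub _ _ h1).1 (hsub _ _ h2).1
      · intro a b c a' b' c' h1 h2 h3
        exact h.av _ _ _ _ _ _ (hsub _ _ h1).1 (hsub _ _ h2).1 (hsub _ _ h3).1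
      · intro a b a' b' h1 h2 hab hbo
        obtain ⟨h1, h1'⟩ := hsub _ _ h1
        obtain ⟨h2, h2'⟩ := hsub _ _ h2
        have h3 := h.av _ _ _ _ _ _ h1 h2 ho hab hbo (hC _ (hbig _ _ h1 h1'))
        have h4 : a' ≠ b' := by
          rintro rfl
          have := h.unC _ _ _ h1 h2
          omega
        omega
  · rintro ⟨o, hoL, hoq, M', h, rfl⟩
    have hx : x ∉ C := fun h => lt_irrefl _ (hC _ h)
    have hoO : o ∉ L.erase o ∪ O := by
      simp only [Finset.mem_union, Finset.mem_erase]
      rintro (h | h)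
      · exact h.1 rfl
      · have := hO _ h
        have := hL _ hoL
        omega
    have hox := hL _ hoL
    have hmem : ∀ a c, (a, c) ∈ insert (o, x) M' ↔
        (a = o ∧ c = x) ∨ ((a, c) ∈ M' ∧ a ≠ o ∧ x < c) := by
      intro a c
      rw [Finset.mem_insert, Prod.mk.injEq]
      constructor
      · rintro (h' | h')
        · exact Or.inl h'
        · refine Or.inr ⟨h', ?_, hC _ (h.mem _ _ h').2.1⟩
          rintro rfl
          exact hoO (h.mem _ _ h').1
      · rintro (h' | h')
        · exact Or.inl h'
        · exact Or.inr h'.1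
    refine ⟨?_, ?_, ?_, ?_, ?_, ?_, ?_⟩
    · intro a c hac
      rcases (hmem _ _).1 hac with ⟨rfl, rfl⟩ | ⟨h', _, _⟩
      · exact ⟨Finset.mem_union_left _ hoL, by simp, hox⟩
      · obtain ⟨h1, h2, h3⟩ := h.mem _ _ h'
        refine ⟨?_, Finset.mem_insert_of_mem h2, h3⟩
        simp only [Finset.mem_union, Finset.mem_erase] at h1 ⊢
        tauto
    · intro a ha
      by_cases hao : a = o
      · exact ⟨x, by simp [hao]⟩
      · obtain ⟨c, hc⟩ := h.exO a (by
          simp only [Finset.mem_union, Finset.mem_erase] at ha ⊢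
          tauto)
        exact ⟨c, Finset.mem_insert_of_mem hc⟩
    · intro c hc
      rcases Finset.mem_insert.1 hc with rfl | hc
      · exact ⟨o, by simp⟩
      · obtain ⟨a, ha⟩ := h.exC c hc
        exact ⟨a, Finset.mem_insert_of_mem ha⟩
    · intro a c c' h1 h2
      rcases (hmem _ _).1 h1 with ⟨e1, e2⟩ | ⟨h1, e1, e2⟩ <;>
      rcases (hmem _ _).1 h2 with ⟨e3, e4⟩ | ⟨h2, e3, e4⟩
      · omega
      · omega
      · omega
      · exact h.unO _ _ _ h1 h2
    · intro a a' c h1 h2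
      rcases (hmem _ _).1 h1 with ⟨e1, e2⟩ | ⟨h1, e1, e2⟩ <;>
      rcases (hmem _ _).1 h2 with ⟨e3, e4⟩ | ⟨h2, e3, e4⟩
      · omega
      · omega
      · omega
      · exact h.unC _ _ _ h1 h2
    · intro a b c a' b' c' h1 h2 h3 hab hbc hca hab'
      rcases (hmem _ _).1 h3 with ⟨e1, e2⟩ | ⟨h3, e1, e2⟩ <;>
      rcases (hmem _ _).1 h1 with ⟨e3, e4⟩ | ⟨h1, e3, e4⟩ <;>
      rcases (hmem _ _).1 h2 with ⟨e5, e6⟩ | ⟨h2, e5, e6⟩ <;> try omega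
      · have := h.fr _ _ _ _ h1 h2 hab (by omega)
        omega
      · exact h.av _ _ _ _ _ _ h1 h2 h3 hab hbc hca hab'
    · intro a b a' b' h1 h2 hab hbq
      have hbo : b ≤ o := by
        rcases (hmem _ _).1 h2 with ⟨e1, e2⟩ | ⟨h2, e1, e2⟩
        · omega
        · have := (h.mem _ _ h2).1
          simp only [Finset.mem_union, Finset.mem_erase] at this
          rcases this with h' | h'
          · exact hoq _ h'.2 hbq
          · have := hO _ h'; omega
      rcases (hmem _ _).1 h1 with ⟨e3, e4⟩ | ⟨h1, e3, e4⟩ <;>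
      rcases (hmem _ _).1 h2 with ⟨e5, e6⟩ | ⟨h2, e5, e6⟩ <;> try omega
      exact h.fr _ _ _ _ h1 h2 hab (by omega)

theorem rank_inj (L : Finset ℕ) : Set.InjOn (fun o => (L.filter (· < o)).card) (L : Set ℕ) := by
  have key : ∀ a ∈ L, ∀ b ∈ L, a < b → (L.filter (· < a)).card < (L.filter (· < b)).card := by
    intro a ha b hb hab
    apply Finset.card_lt_card
    rw [Finset.ssubset_iff_of_subset]
    · exact ⟨a, by simp [ha, hab], by simp⟩
    · intro y hy
      simp only [Finset.mem_filter] at hy ⊢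
      exact ⟨hy.1, by omega⟩
  intro a ha b hb hab
  simp only at hab
  rcases lt_trichotomy a b with h | h | h
  · have := key a ha b hb h; omega
  · exact h
  · have := key b hb a ha h; omega

theorem rank_lt (L : Finset ℕ) (o : ℕ) (ho : o ∈ L) : (L.filter (· < o)).card < L.card := by
  apply Finset.card_lt_card
  rw [Finset.ssubset_iff_of_subset (Finset.filter_subset _ _)]
  exact ⟨o, ho, by simp⟩

theorem rank_sum (L : Finset ℕ) (f : ℕ → ℕ) :
    ∑ o ∈ L, f ((L.filter (· < o)).card) = ∑ i ∈ Finset.range L.card, f i := by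
  have : L.image (fun o => (L.filter (· < o)).card) = Finset.range L.card := by
    apply Finset.eq_of_subset_of_card_le
    · intro i hi
      obtain ⟨o, ho, rfl⟩ := Finset.mem_image.1 hi
      exact Finset.mem_range.2 (rank_lt L o ho)
    · rw [Finset.card_range, Finset.card_image_of_injOn (rank_inj L)]
  rw [← this, Finset.sum_image (rank_inj L)]

theorem rank_cond (L : Finset ℕ) (q o : ℕ) (ho : o ∈ L) :
    (∀ y ∈ L, y < q → y ≤ o) ↔ (L.filter (· < q)).card ≤ (L.filter (· < o)).card + 1 := by
  have hins : (insert o (L.filter (· < o))).card = (L.filter (· < o)).card + 1 := by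
    rw [Finset.card_insert_of_notMem (by simp)]
  constructor
  · intro h
    rw [← hins]
    apply Finset.card_le_card
    intro y hy
    simp only [Finset.mem_filter, Finset.mem_insert] at hy ⊢
    have := h y hy.1 hy.2
    rcases eq_or_lt_of_le this with h' | h'
    · exact Or.inl h'
    · exact Or.inr ⟨hy.1, h'⟩
  · intro h y hy hyq
    by_contra hlt
    push Not at hlt
    rw [← hins] at h
    have : (insert o (L.filter (· < o))).card < (L.filter (· < q)).card := by
      apply Finset.card_lt_card
      rw [Finset.ssubset_iff_of_subset]
      · exact ⟨y, by simp [hy, hyq], by simp; omega⟩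
      · intro z hz
        simp only [Finset.mem_filter, Finset.mem_insert] at hz ⊢
        rcases hz with rfl | hz
        · exact ⟨ho, by omega⟩
        · exact ⟨hz.1, by omega⟩
    omega

theorem match_count (t : List Bool) : ∀ (L : Finset ℕ) (q x : ℕ), (∀ y ∈ L, y < x) → q ≤ x →
    ∃ F : Finset (Finset (ℕ × ℕ)),
      (∀ M, M ∈ F ↔ GoodM (L ∪ posOf true x t) (posOf false x t) q M) ∧
      F.card = cnt213 t (L.filter (· < q)).card L.card := by
  induction t with
  | nil =>
    intro L q x hL hq
    simp only [posOf, Finset.union_empty, cnt213, Finset.card_eq_zero]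
    by_cases h : L = ∅
    · subst h
      refine ⟨{∅}, ?_, by simp⟩
      intro M
      rw [Finset.mem_singleton]
      constructor
      · rintro rfl
        constructor <;> simp
      · intro h
        rw [Finset.eq_empty_iff_forall_notMem]
        rintro ⟨a, c⟩ hac
        simpa using (h.mem _ _ hac).1
    · refine ⟨∅, ?_, by simp [h]⟩
      intro M
      simp only [Finset.notMem_empty, false_iff]
      intro hM
      obtain ⟨a, ha⟩ := Finset.nonempty_iff_ne_empty.2 h
      obtain ⟨c, hc⟩ := hM.exO a ha
      simpa using (hM.mem _ _ hc).2.1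
  | cons b t ih =>
    intro L q x hL hq
    cases b with
    | true =>
      obtain ⟨F, h1, h2⟩ := ih (insert x L) q (x + 1)
        (by intro y hy
            rcases Finset.mem_insert.1 hy with rfl | hy
            · omega
            · have := hL _ hy; omega) (by omega)
      refine ⟨F, ?_, ?_⟩
      · intro M
        rw [h1]
        have e : insert x L ∪ posOf true (x + 1) t = L ∪ posOf true x (true :: t) := by
          simp [posOf]
        rw [e]
        simp [posOf]
      · rw [h2, Finset.filter_insert, if_neg (by omega), Finset.card_insert_of_notMem]
        · rfl
        · intro h; exact lt_irrefl _ (hL _ h)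
    | false =>
      have ih' : ∀ o, ∃ F : Finset (Finset (ℕ × ℕ)), o ∈ L →
          (∀ M, M ∈ F ↔ GoodM (L.erase o ∪ posOf true (x + 1) t) (posOf false (x + 1) t) o M) ∧
          F.card = cnt213 t (L.filter (· < o)).card (L.card - 1) := by
        intro o
        by_cases ho : o ∈ L
        · have hox := hL _ ho
          obtain ⟨F, h1, h2⟩ := ih (L.erase o) o (x + 1)
            (by intro y hy
                have := hL _ (Finset.mem_of_mem_erase hy); omega) (by omega)
          refine ⟨F, fun _ => ⟨h1, ?_⟩⟩
          rw [h2, Finset.card_erase_of_mem ho]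
          congr 2
          ext y
          simp only [Finset.mem_filter, Finset.mem_erase]
          constructor
          · tauto
          · rintro ⟨h, h'⟩; exact ⟨⟨by omega, h⟩, h'⟩
        · exact ⟨∅, fun h => (ho h).elim⟩
      choose F hF using ih'
      have hO : ∀ y ∈ posOf true (x + 1) t, x < y := by
        intro y hy
        obtain ⟨i, _, rfl⟩ := (mem_posOf _ _ _ _).1 hy
        omega
      have hC : ∀ y ∈ posOf false (x + 1) t, x < y := by
        intro y hy
        obtain ⟨i, _, rfl⟩ := (mem_posOf _ _ _ _).1 hy
        omega
      have e1 : posOf true x (false :: t) = posOf true (x + 1) t := by simp [posOf]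
      have e2 : posOf false x (false :: t) = insert x (posOf false (x + 1) t) := by simp [posOf]
      have hnot : ∀ o ∈ L, ∀ o', ∀ M ∈ F o, (o', x) ∉ M := by
        intro o ho o' M hM hmem
        have := ((((hF o ho).1 M).1 hM).mem _ _ hmem).2.1
        have := hC _ this
        omega
      refine ⟨(L.filter (fun o => ∀ y ∈ L, y < q → y ≤ o)).biUnion
        (fun o => (F o).image (insert (o, x))), ?_, ?_⟩
      · intro M
        rw [e1, e2, good_close L _ _ q x hL hO hC hq]
        simp only [Finset.mem_biUnion, Finset.mem_filter, Finset.mem_image]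
        constructor
        · rintro ⟨o, ⟨ho, ho'⟩, M', hM', rfl⟩
          exact ⟨o, ho, ho', M', ((hF o ho).1 _).1 hM', rfl⟩
        · rintro ⟨o, ho, ho', M', hM', rfl⟩
          exact ⟨o, ⟨ho, ho'⟩, M', ((hF o ho).1 _).2 hM', rfl⟩
      · rw [Finset.card_biUnion]
        · simp only [cnt213]
          rw [← rank_sum L (fun i => if (L.filter (· < q)).card ≤ i + 1 then
            cnt213 t i (L.card - 1) else 0), Finset.sum_filter]
          apply Finset.sum_congr rfl
          intro o ho
          simp only [rank_cond L q o ho]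
          split_ifs with hc
          · rw [Finset.card_image_of_injOn, (hF o ho).2]
            intro M hM M' hM' hEq
            have := congrArg (fun S => Finset.erase S (o, x)) hEq
            simpa [Finset.erase_insert (hnot o ho o M hM),
              Finset.erase_insert (hnot o ho o M' hM')] using this
          · rfl
        · intro o ho o' ho' hne
          rw [Function.onFun, Finset.disjoint_left]
          intro S hS hS'
          obtain ⟨M, hM, rfl⟩ := Finset.mem_image.1 hS
          obtain ⟨M', hM', hEq⟩ := Finset.mem_image.1 hS'
          have h1 : (o, x) ∈ insert (o', x) M' := by rw [hEq]; simp
          rcases Finset.mem_insert.1 h1 with h1 | h1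
          · simp at h1; exact hne h1
          · exact hnot o' (Finset.mem_filter.1 ho').1 o M' hM' h1

theorem contains213_iff (M : Finset (ℕ × ℕ)) :
    MatchContains p213 M ↔ ∃ a b c a' b' c', (a, a') ∈ M ∧ (b, b') ∈ M ∧ (c, c') ∈ M ∧
      a < b ∧ b < c ∧ c < c' ∧ c' < a' ∧ a' < b' := by
  constructor
  · rintro ⟨f, hf, h⟩
    have h0 := h 0
    have h1 := h 1
    have h2 := h 2
    refine ⟨f 0, f 1, f 2, f 4, f 5, f 3, h0, h1, h2, ?_, ?_, ?_, ?_, ?_⟩ <;>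
      exact hf (by decide)
  · rintro ⟨a, b, c, a', b', c', h1, h2, h3, h4, h5, h6, h7, h8⟩
    refine ⟨![a, b, c, c', a', b'], ?_, ?_⟩
    · rw [Fin.strictMono_iff_lt_succ]
      intro i
      fin_cases i <;> simpa
    · intro i
      fin_cases i
      · exact h1
      · exact h2
      · exact h3

theorem good_iff (n : ℕ) (t : List Bool) (ht : IsDyckPath n t) (M : Finset (ℕ × ℕ)) :
    (IsPerfectMatching n M ∧ MatchAvoids p213 M ∧ shapeOf n M = t) ↔
      GoodM (posOf true 1 t) (posOf false 1 t) 0 M := by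
  have hlen := ht.1
  have hO : ∀ y b, y ∈ posOf b 1 t ↔ 1 ≤ y ∧ t[y - 1]? = some b := by
    intro y b
    rw [mem_posOf]
    constructor
    · rintro ⟨i, h, rfl⟩
      refine ⟨by omega, ?_⟩
      rwa [show 1 + i - 1 = i by omega]
    · rintro ⟨h, h'⟩
      exact ⟨y - 1, h', by omega⟩
  have hO1 : ∀ y b, y ∈ posOf b 1 t → 1 ≤ y ∧ y ≤ 2 * n := by
    intro y b h
    obtain ⟨h1, h2⟩ := (hO y b).1 h
    obtain ⟨h3, _⟩ := List.getElem?_eq_some_iff.1 h2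
    omega
  have hdis : ∀ y, y ∈ posOf true 1 t → y ∈ posOf false 1 t → False := by
    intro y h1 h2
    have h1 := ((hO _ _).1 h1).2
    have h2 := ((hO _ _).1 h2).2
    rw [h1] at h2
    simp at h2
  have hor : ∀ y, 1 ≤ y → y ≤ 2 * n → y ∈ posOf true 1 t ∨ y ∈ posOf false 1 t := by
    intro y h1 h2
    rw [hO, hO, List.getElem?_eq_getElem (by omega)]
    cases t[y - 1]'(by omega) <;> simp [h1]
  have hshape : shapeOf n M = t ↔
      ∀ y, 1 ≤ y → y ≤ 2 * n → (y ∈ posOf true 1 t ↔ ∃ c, (y, c) ∈ M) := by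
    constructor
    · rintro hs y h1 h2
      rw [hO, ← hs]
      simp [shapeOf, List.getElem?_range (show y - 1 < 2 * n by omega), h1,
        show y - 1 + 1 = y by omega]
    · intro h
      apply List.ext_getElem
      · simp [shapeOf, hlen]
      · intro i h1 h2
        have := h (i + 1) (by omega) (by omega)
        rw [hO] at this
        simp [h2] at this
        rw [Bool.eq_iff_iff, this]
        have hget : (shapeOf n M)[i] = decide ((i + 1) ∈ M.image Prod.fst) := by
          have h3 : (shapeOf n M)[i]? = some (decide ((i + 1) ∈ M.image Prod.fst)) := by
            simp [shapeOf, List.getElem?_range (show i < 2 * n by omega)]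
          exact (List.getElem?_eq_some_iff.1 h3).2
        rw [hget]
        simp
  rw [hshape, MatchAvoids, contains213_iff]
  constructor
  · rintro ⟨⟨hm1, hm2⟩, hav, hs⟩
    have huniq : ∀ x a c a' c', (a, c) ∈ M → (a', c') ∈ M → (a = x ∨ c = x) →
        (a' = x ∨ c' = x) → a = a' ∧ c = c' := by
      intro x a c a' c' h h' hx hx'
      have g1 := hm1 _ h
      simp only at g1
      obtain ⟨p, _, hp⟩ := hm2 x (by omega) (by omega)
      have e1 := hp (a, c) ⟨h, hx⟩
      have e2 := hp (a', c') ⟨h', hx'⟩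
      rw [← e2] at e1
      simpa using e1
    have hnf : ∀ a c, (a, c) ∈ M → ¬ ∃ d, (c, d) ∈ M := by
      rintro a c h ⟨d, hd⟩
      have := huniq c _ _ _ _ h hd (Or.inr rfl) (Or.inl rfl)
      have := hm1 _ h
      simp only at this
      omega
    refine ⟨?_, ?_, ?_, ?_, ?_, ?_, ?_⟩
    · intro a c h
      have g := hm1 _ h
      simp only at g
      refine ⟨(hs a (by omega) (by omega)).2 ⟨c, h⟩, ?_, g.1⟩
      rcases hor c (by omega) (by omega) with h' | h'
      · exact (hnf _ _ h ((hs c (by omega) (by omega)).1 h')).elim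
      · exact h'
    · intro a ha
      have := hO1 _ _ ha
      exact (hs a this.1 this.2).1 ha
    · intro c hc
      have := hO1 _ _ hc
      obtain ⟨⟨a, b⟩, ⟨h1, h2⟩, _⟩ := hm2 c this.1 this.2
      rcases h2 with h2 | h2 <;> simp only at h2
      · subst h2
        exact (hdis _ ((hs _ this.1 this.2).2 ⟨b, h1⟩) hc).elim
      · subst h2
        exact ⟨a, h1⟩
    · intro a c c' h h'
      exact (huniq a _ _ _ _ h h' (Or.inl rfl) (Or.inl rfl)).2
    · intro a a' c h h'
      exact (huniq c _ _ _ _ h h' (Or.inr rfl) (Or.inr rfl)).1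
    · intro a b c a' b' c' h1 h2 h3 h4 h5 h6 h7
      exact hav ⟨a, b, c, a', b', c', h1, h2, h3, h4, h5, (hm1 _ h3).1, h6, h7⟩
    · intro a b a' b' _ _ _ h
      omega
  · intro h
    refine ⟨⟨?_, ?_⟩, ?_, ?_⟩
    · rintro ⟨a, c⟩ hac
      obtain ⟨h1, h2, h3⟩ := h.mem _ _ hac
      exact ⟨h3, (hO1 _ _ h1).1, (hO1 _ _ h2).2⟩
    · intro x hx1 hx2
      rcases hor x hx1 hx2 with hx | hx
      · obtain ⟨c, hc⟩ := h.exO x hx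
        refine ⟨(x, c), ⟨hc, Or.inl rfl⟩, ?_⟩
        rintro ⟨a, d⟩ ⟨had, h' | h'⟩ <;> simp only at h' <;> subst h'
        · rw [h.unO _ _ _ had hc]
        · exact (hdis _ hx (h.mem _ _ had).2.1).elim
      · obtain ⟨c, hc⟩ := h.exC x hx
        refine ⟨(c, x), ⟨hc, Or.inr rfl⟩, ?_⟩
        rintro ⟨a, d⟩ ⟨had, h' | h'⟩ <;> simp only at h' <;> subst h'
        · exact (hdis _ (h.mem _ _ had).1 hx).elim
        · rw [h.unC _ _ _ had hc]
    · rintro ⟨a, b, c, a', b', c', h1, h2, h3, h4, h5, _, h6, h7⟩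
      exact h.av _ _ _ _ _ _ h1 h2 h3 h4 h5 h6 h7
    · intro y _ _
      exact ⟨h.exO y, fun ⟨c, hc⟩ => (h.mem _ _ hc).1⟩

theorem ph_len (l : List Bool) : pathHeight l l.length = 2 * (l.count true : ℤ) - l.length := by
  have : l.count true + l.count false = l.length := by
    induction l with
    | nil => rfl
    | cons b l ih => cases b <;> simp <;> omega
  rw [pathHeight, List.take_length]
  omega

/-- For every positive `n` and every Ferrers board `F ∈ F_n`
(given by its border Dyck path `t`), the number of `213`-avoiding perfect matchings
of shape `F` equals the number of Dyck paths of semilength `n` lying weakly below `t`. -/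
theorem card_matchings213_of_shape_eq_card_paths_below
    (n : ℕ) (hn : 0 < n) (t : List Bool) (ht : IsDyckPath n t) :
    {M : Finset (ℕ × ℕ) | IsPerfectMatching n M ∧ MatchAvoids p213 M ∧ shapeOf n M = t}.ncard =
    {s : List Bool | IsDyckPath n s ∧ WeaklyBelow s t}.ncard := by
  obtain ⟨F, hF, hFc⟩ := match_count t ∅ 0 1 (by simp) (by simp)
  obtain ⟨G, hG, hGc⟩ := path_count t 0 0 (by
    rw [ph_len, ht.1, ht.2.1]; push_cast; ring)
  have e1 : {M : Finset (ℕ × ℕ) | IsPerfectMatching n M ∧ MatchAvoids p213 M ∧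
      shapeOf n M = t} = (F : Set (Finset (ℕ × ℕ))) := by
    ext M
    rw [Set.mem_setOf_eq, good_iff n t ht, Finset.mem_coe, hF, Finset.empty_union]
  have e2 : {s : List Bool | IsDyckPath n s ∧ WeaklyBelow s t} = (G : Set (List Bool)) := by
    ext s
    rw [Set.mem_setOf_eq, Finset.mem_coe, hG]
    simp only [IsDyckPath, WeaklyBelow, PB, ph_len, List.replicate_zero, List.nil_append, ht.1]
    constructor
    · rintro ⟨⟨h1, h2, h3⟩, h4⟩
      refine ⟨h1, ?_, ?_, h4⟩
      · intro i
        have := h3 i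
        simp only [pathHeight]
        omega
      · rw [h1, h2]; push_cast; ring
    · rintro ⟨h1, h2, h3, h4⟩
      refine ⟨⟨h1, ?_, ?_⟩, h4⟩
      · rw [h1] at h3; push_cast at h3; omega
      · intro i
        have := h2 i
        simp only [pathHeight] at this
        omega
  rw [e1, e2, Set.ncard_coe_finset, Set.ncard_coe_finset, hFc, hGc]
  simp
end

section
/- The patterns 321 and 213 are shape-Wilf-equivalent: for every positive integer n and every Ferrers board F in F_n, the number of 321-avoiding matchings of shape F equals the number of 213-avoiding matchings of shape F. Consequently, for every n the total number of 321-avoiding matchings of [2n] equals the total number of 213-avoiding matchings of [2n]. -/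
open Polynomial in
theorem chebMul (b c : ℕ) : Chebyshev.S ℤ (b:ℤ) * Chebyshev.S ℤ ((c:ℤ)+1)
   = Chebyshev.S ℤ ((b:ℤ)+c+1) + Chebyshev.S ℤ ((b:ℤ)-1) * Chebyshev.S ℤ (c:ℤ) := by
  induction b using Nat.twoStepInduction with
  | zero => simp
  | one =>
    have := Chebyshev.S_add_two ℤ (c:ℤ)
    simp
    rw [show (1:ℤ)+c+1 = c+2 by ring, this]; ring
  | more n h1 h2 =>
    push_cast at *
    have e1 := Chebyshev.S_add_two ℤ (n:ℤ)
    have e2 := Chebyshev.S_add_two ℤ ((n:ℤ)+c+1)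
    have e3 := Chebyshev.S_add_two ℤ ((n:ℤ)-1)
    rw [show (n:ℤ)+2+c+1 = n+c+1+2 by ring, e1, e2, show (n:ℤ)+2-1 = n-1+2 by ring, e3]
    rw [show (n:ℤ)+1+c+1 = n+c+1+1 by ring, show (n:ℤ)+1-1 = n-1+1 by ring] at h2
    linear_combination X * h2 - h1

open Polynomial in
theorem chebMonic (b : ℕ) : (Chebyshev.S ℤ (b:ℤ)).Monic ∧ (Chebyshev.S ℤ (b:ℤ)).natDegree = b := by
  induction b using Nat.twoStepInduction with
  | zero => simp
  | one => simp [monic_X]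
  | more n h1 h2 =>
    push_cast at *
    have e1 := Chebyshev.S_add_two ℤ (n:ℤ)
    have hm : (X * Chebyshev.S ℤ ((n:ℤ)+1)).Monic := monic_X.mul h2.1
    have hd : (X * Chebyshev.S ℤ ((n:ℤ)+1)).natDegree = n + 2 := by
      rw [monic_X.natDegree_mul h2.1, h2.2]; simp; ring
    have hlt : (Chebyshev.S ℤ (n:ℤ)).degree < (X * Chebyshev.S ℤ ((n:ℤ)+1)).degree := by
      apply degree_lt_degree; rw [hd, h1.2]; omega
    rw [e1]
    exact ⟨hm.sub_of_left hlt, by rw [natDegree_sub_eq_left_of_natDegree_lt (by rw [hd, h1.2]; omega), hd]⟩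

open Polynomial in
theorem telescope (f : ℕ → ℕ) (K : ℕ) :
   ∑ k ∈ Finset.range K, (∏ j ∈ Finset.range k, Chebyshev.S ℤ (f j : ℤ)) * 
      (Chebyshev.S ℤ ((f k : ℤ) - 1) * Chebyshev.S ℤ ((∑ j ∈ Finset.Ico (k+1) K, f j : ℕ) : ℤ))
   = X * ∏ j ∈ Finset.range K, Chebyshev.S ℤ (f j : ℤ) - Chebyshev.S ℤ ((∑ j ∈ Finset.range K, f j : ℕ) + 1 : ℤ) := by
  let T : ℕ → ℤ[X] := fun k => (∏ j ∈ Finset.range k, Chebyshev.S ℤ (f j : ℤ)) *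
     Chebyshev.S ℤ ((∑ j ∈ Finset.Ico k K, f j : ℕ) + 1 : ℤ)
  have h := Finset.sum_range_sub T K
  have e1 : T K = X * ∏ j ∈ Finset.range K, Chebyshev.S ℤ (f j : ℤ) := by simp [T]; ring
  have e0 : T 0 = Chebyshev.S ℤ ((∑ j ∈ Finset.range K, f j : ℕ) + 1 : ℤ) := by
    simp [T]
  rw [← e1, ← e0, ← h]
  refine Finset.sum_congr rfl fun k hk => ?_
  have hk := Finset.mem_range.1 hk
  have := chebMul (f k) (∑ j ∈ Finset.Ico (k+1) K, f j)
  simp only [T, Finset.prod_range_succ]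
  rw [Finset.sum_eq_sum_Ico_succ_bot hk, mul_assoc, ← mul_sub, this]
  push_cast
  ring

open Polynomial in
theorem telescope2 (h s : ℕ) (hs : s ≤ h) :
   ∑ r ∈ Finset.range h, (if s ≤ r + 1 then X ^ (h - 1 - r) * Chebyshev.S ℤ (r : ℤ) else 0)
   = X * (X ^ (h - s) * Chebyshev.S ℤ (s:ℤ)) - Chebyshev.S ℤ ((h:ℤ)+1) := by
  induction h, hs using Nat.le_induction with
  | base =>
    rcases s with _ | s
    · simp
    · rw [Finset.sum_range_succ, Finset.sum_eq_zero]
      · have := Chebyshev.S_add_two ℤ (s:ℤ)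
        simp
        rw [show (s:ℤ)+1+1 = s+2 by ring, this]; ring
      · intro x hx; rw [if_neg]; simp at hx; omega
  | succ h hs ih =>
    rw [Finset.sum_range_succ]
    have : ∑ r ∈ Finset.range h, (if s ≤ r + 1 then (X:ℤ[X]) ^ (h + 1 - 1 - r) * Chebyshev.S ℤ (r : ℤ) else 0)
      = X * ∑ r ∈ Finset.range h, (if s ≤ r + 1 then X ^ (h - 1 - r) * Chebyshev.S ℤ (r : ℤ) else 0) := by
      rw [Finset.mul_sum]
      refine Finset.sum_congr rfl fun r hr => ?_
      have hr := Finset.mem_range.1 hr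
      split_ifs
      · rw [show h+1-1-r = (h-1-r)+1 by omega]; ring
      · simp
    rw [this, ih, if_pos (by omega), show h+1-s = (h-s)+1 by omega]
    have := Chebyshev.S_add_two ℤ (h:ℤ)
    simp
    rw [show (h:ℤ)+1+1 = h+2 by ring, this]; ring

theorem sum_rank {β : Type*} [AddCommMonoid β] (g : ℕ → β) (O : Finset ℕ) :
    ∑ o ∈ O, g ((O.filter (· < o)).card) = ∑ r ∈ Finset.range O.card, g r := by
  induction O using Finset.induction_on_max with
  | empty => simp
  | insert a O ha ih =>
    have hn : a ∉ O := fun h => lt_irrefl _ (ha a h)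
    rw [Finset.sum_insert hn, Finset.card_insert_of_notMem hn, Finset.sum_range_succ, ← ih, add_comm]
    congr 1
    · refine Finset.sum_congr rfl fun o ho => ?_
      congr 2
      rw [Finset.filter_insert, if_neg (by have := ha o ho; omega)]
    · congr 2
      rw [Finset.filter_insert, if_neg (by omega)]
      exact Finset.filter_true_of_mem ha
structure IsM (A B : Finset ℕ) (C : Finset (ℕ × ℕ)) : Prop where
  fst : C.image Prod.fst = A
  snd : C.image Prod.snd = B
  i1 : ∀ p ∈ C, ∀ q ∈ C, p.1 = q.1 → p = q
  i2 : ∀ p ∈ C, ∀ q ∈ C, p.2 = q.2 → p = q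
  lt : ∀ p ∈ C, p.1 < p.2

theorem IsM.mem1 {A B : Finset ℕ} {C : Finset (ℕ × ℕ)} (h : IsM A B C) {x y : ℕ}
    (hp : (x, y) ∈ C) : x ∈ A := by
  rw [← h.fst]; exact Finset.mem_image_of_mem Prod.fst hp

theorem IsM.mem2 {A B : Finset ℕ} {C : Finset (ℕ × ℕ)} (h : IsM A B C) {x y : ℕ}
    (hp : (x, y) ∈ C) : y ∈ B := by
  rw [← h.snd]; exact Finset.mem_image_of_mem Prod.snd hp

theorem IsM.ex1 {A B : Finset ℕ} {C : Finset (ℕ × ℕ)} (h : IsM A B C) {x : ℕ}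
    (hp : x ∈ A) : ∃ y, (x, y) ∈ C := by
  rw [← h.fst] at hp; simpa using hp

theorem IsM.ex2 {A B : Finset ℕ} {C : Finset (ℕ × ℕ)} (h : IsM A B C) {y : ℕ}
    (hp : y ∈ B) : ∃ x, (x, y) ∈ C := by
  rw [← h.snd] at hp; simpa using hp

def Cons (R : ℕ → ℕ → Prop) (C : Finset (ℕ × ℕ)) : Prop :=
  ∀ x y x' y', R x y → (x, x') ∈ C → (y, y') ∈ C → y' < x'

def Av3 (C : Finset (ℕ × ℕ)) : Prop :=
  ∀ a b c a' b' c', (a, a') ∈ C → (b, b') ∈ C → (c, c') ∈ C →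
    a < b → b < c → c < a' → a' < b' → b' < c' → False

def Av2 (C : Finset (ℕ × ℕ)) : Prop :=
  ∀ a b c a' b' c', (a, a') ∈ C → (b, b') ∈ C → (c, c') ∈ C →
    a < b → b < c → c < c' → c' < a' → a' < b' → False

open Classical in
noncomputable def NN (Av : Finset (ℕ × ℕ) → Prop) (A B : Finset ℕ) (R : ℕ → ℕ → Prop) :
    Finset (Finset (ℕ × ℕ)) :=
  (A ×ˢ B).powerset.filter fun C => IsM A B C ∧ Av C ∧ Cons R C

open Classical in
theorem mem_NN {Av : Finset (ℕ × ℕ) → Prop} {A B : Finset ℕ} {R : ℕ → ℕ → Prop}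
    {C : Finset (ℕ × ℕ)} : C ∈ NN Av A B R ↔ IsM A B C ∧ Av C ∧ Cons R C := by
  unfold NN
  rw [Finset.mem_filter, Finset.mem_powerset]
  refine ⟨fun h => h.2, fun h => ⟨?_, h⟩⟩
  rintro ⟨x, y⟩ hp
  exact Finset.mem_product.2 ⟨h.1.mem1 hp, h.1.mem2 hp⟩

theorem IsM.ins {A B : Finset ℕ} {C : Finset (ℕ × ℕ)} {o i : ℕ} (h : IsM (A.erase o) B C)
    (ho : o ∈ A) (hi : i ∉ B) (hoi : o < i) : IsM A (insert i B) (insert (o, i) C) := by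
  refine ⟨?_, ?_, ?_, ?_, ?_⟩
  · rw [Finset.image_insert, h.fst, Finset.insert_erase ho]
  · rw [Finset.image_insert, h.snd]
  · rintro ⟨a, b⟩ hp ⟨c, d⟩ hq e
    simp only [Finset.mem_insert, Prod.mk.injEq] at hp hq e
    rcases hp with ⟨rfl, rfl⟩ | hp <;> rcases hq with ⟨rfl, rfl⟩ | hq
    · rfl
    · subst e; exact absurd (h.mem1 hq) (by simp)
    · subst e; exact absurd (h.mem1 hp) (by simp)
    · exact h.i1 _ hp _ hq e
  · rintro ⟨a, b⟩ hp ⟨c, d⟩ hq e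
    simp only [Finset.mem_insert, Prod.mk.injEq] at hp hq e
    rcases hp with ⟨rfl, rfl⟩ | hp <;> rcases hq with ⟨rfl, rfl⟩ | hq
    · rfl
    · subst e; exact absurd (h.mem2 hq) hi
    · subst e; exact absurd (h.mem2 hp) hi
    · exact h.i2 _ hp _ hq e
  · intro p hp
    rcases Finset.mem_insert.1 hp with rfl | hp
    · exact hoi
    · exact h.lt p hp

theorem IsM.ers {A B : Finset ℕ} {C : Finset (ℕ × ℕ)} {o i : ℕ} (h : IsM A (insert i B) C)
    (hp : (o, i) ∈ C) (hi : i ∉ B) : IsM (A.erase o) B (C.erase (o, i)) := by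
  refine ⟨?_, ?_, ?_, ?_, ?_⟩
  · ext x
    simp only [Finset.mem_image, Finset.mem_erase]
    constructor
    · rintro ⟨⟨a, b⟩, ⟨hne, hm⟩, rfl⟩
      exact ⟨fun e => hne (h.i1 _ hm _ hp e), h.mem1 hm⟩
    · rintro ⟨hne, hx⟩
      obtain ⟨y, hy⟩ := h.ex1 hx
      exact ⟨(x, y), ⟨fun e => hne (congrArg Prod.fst e), hy⟩, rfl⟩
  · ext x
    simp only [Finset.mem_image, Finset.mem_erase]
    constructor
    · rintro ⟨⟨a, b⟩, ⟨hne, hm⟩, rfl⟩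
      rcases Finset.mem_insert.1 (h.mem2 hm) with e | e
      · exact absurd (h.i2 _ hm _ hp e) hne
      · exact e
    · intro hx
      obtain ⟨y, hy⟩ := h.ex2 (Finset.mem_insert_of_mem hx)
      exact ⟨(y, x), ⟨fun e => hi (by have h' : x = i := congrArg Prod.snd e
                                      exact h' ▸ hx), hy⟩, rfl⟩
  · exact fun p hp q hq => h.i1 p (Finset.mem_of_mem_erase hp) q (Finset.mem_of_mem_erase hq)
  · exact fun p hp q hq => h.i2 p (Finset.mem_of_mem_erase hp) q (Finset.mem_of_mem_erase hq)
  · exact fun p hp => h.lt p (Finset.mem_of_mem_erase hp)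

theorem cons_insert {A B : Finset ℕ} {C : Finset (ℕ × ℕ)} {o i : ℕ} {R : ℕ → ℕ → Prop}
    (h : IsM (A.erase o) B C) (ho : o ∈ A) (hB : ∀ b ∈ B, i < b) :
    Cons R (insert (o, i) C) ↔ (∀ y ∈ A, ¬ R o y) ∧ Cons R C := by
  constructor
  · intro hc
    refine ⟨fun y hy hR => ?_, fun x y x' y' hR hx hy =>
      hc x y x' y' hR (Finset.mem_insert_of_mem hx) (Finset.mem_insert_of_mem hy)⟩
    by_cases hyo : y = o
    · subst hyo
      exact lt_irrefl _ (hc y y i i hR (Finset.mem_insert_self _ _) (Finset.mem_insert_self _ _))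
    · obtain ⟨y', hy'⟩ := h.ex1 (Finset.mem_erase.2 ⟨hyo, hy⟩)
      have := hc o y i y' hR (Finset.mem_insert_self _ _) (Finset.mem_insert_of_mem hy')
      have := hB y' (h.mem2 hy')
      omega
  · rintro ⟨h1, h2⟩ x y x' y' hR hx hy
    simp only [Finset.mem_insert, Prod.mk.injEq] at hx hy
    rcases hx with ⟨rfl, rfl⟩ | hx <;> rcases hy with ⟨rfl, rfl⟩ | hy
    · exact absurd hR (h1 _ ho)
    · exact absurd hR (h1 _ (Finset.mem_of_mem_erase (h.mem1 hy)))
    · exact hB _ (h.mem2 hx)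
    · exact h2 _ _ _ _ hR hx hy

def AvStep (Av : Finset (ℕ × ℕ) → Prop) (New : ℕ → ℕ → ℕ → ℕ → Prop) : Prop :=
  ∀ (A B : Finset ℕ) (o i : ℕ) (C : Finset (ℕ × ℕ)), IsM (A.erase o) B C → o < i →
    (∀ b ∈ B, i < b) → (Av (insert (o, i) C) ↔ Av C ∧ Cons (New i o) C)

theorem avStep3 : AvStep Av3 (fun i o x y => o < x ∧ x < y ∧ y < i) := by
  intro A B o i C h hoi hB
  have hl : ∀ x y, (x, y) ∈ C → i < y := fun x y hp => hB _ (h.mem2 hp)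
  constructor
  · intro hc
    refine ⟨fun a b c a' b' c' ha hb hcc => hc a b c a' b' c' (Finset.mem_insert_of_mem ha)
      (Finset.mem_insert_of_mem hb) (Finset.mem_insert_of_mem hcc), ?_⟩
    rintro x y x' y' ⟨h1, h2, h3⟩ hx hy
    by_contra hlt
    have hne : x' ≠ y' := fun e => by
      have := congrArg Prod.fst (h.i2 _ hx _ hy e); simp at this; omega
    exact hc o x y i x' y' (Finset.mem_insert_self _ _) (Finset.mem_insert_of_mem hx)
      (Finset.mem_insert_of_mem hy) h1 h2 h3 (hl _ _ hx) (by omega)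
  · rintro ⟨h1, h2⟩ a b c a' b' c' ha hb hc l1 l2 l3 l4 l5
    simp only [Finset.mem_insert, Prod.mk.injEq] at ha hb hc
    have ha' : a' = i ∨ i < a' := by rcases ha with e | e; exact Or.inl e.2; exact Or.inr (hl _ _ e)
    replace hb : (b, b') ∈ C := by
      rcases hb with e | e
      · omega
      · exact e
    replace hc : (c, c') ∈ C := by
      rcases hc with e | e
      · omega
      · exact e
    rcases ha with ⟨rfl, rfl⟩ | ha
    · have := h2 b c b' c' ⟨l1, l2, l3⟩ hb hc
      omega
    · exact h1 a b c a' b' c' ha hb hc l1 l2 l3 l4 l5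

theorem avStep2 : AvStep Av2 (fun _ o x y => x < y ∧ y < o) := by
  intro A B o i C h hoi hB
  have hl : ∀ x y, (x, y) ∈ C → i < y := fun x y hp => hB _ (h.mem2 hp)
  constructor
  · intro hc
    refine ⟨fun a b c a' b' c' ha hb hcc => hc a b c a' b' c' (Finset.mem_insert_of_mem ha)
      (Finset.mem_insert_of_mem hb) (Finset.mem_insert_of_mem hcc), ?_⟩
    rintro x y x' y' ⟨h1, h2⟩ hx hy
    by_contra hlt
    have hne : x' ≠ y' := fun e => by
      have := congrArg Prod.fst (h.i2 _ hx _ hy e); simp at this; omega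
    exact hc x y o x' y' i (Finset.mem_insert_of_mem hx)
      (Finset.mem_insert_of_mem hy) (Finset.mem_insert_self _ _) h1 h2 hoi (hl _ _ hx) (by omega)
  · rintro ⟨h1, h2⟩ a b c a' b' c' ha hb hc l1 l2 l3 l4 l5
    simp only [Finset.mem_insert, Prod.mk.injEq] at ha hb hc
    have hc' : c' = i ∨ i < c' := by rcases hc with e | e; exact Or.inl e.2; exact Or.inr (hl _ _ e)
    replace hb : (b, b') ∈ C := by
      rcases hb with e | e
      · omega
      · exact e
    replace ha : (a, a') ∈ C := by
      rcases ha with e | e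
      · omega
      · exact e
    rcases hc with ⟨rfl, rfl⟩ | hc
    · have := h2 a b a' b' ⟨l1, l2⟩ ha hb
      omega
    · exact h1 a b c a' b' c' ha hb hc l1 l2 l3 l4 l5

open Classical in
theorem card_step {Av : Finset (ℕ × ℕ) → Prop} {New : ℕ → ℕ → ℕ → ℕ → Prop}
    (hAv : AvStep Av New) (A B : Finset ℕ) (i : ℕ) (R : ℕ → ℕ → Prop) (hB : ∀ b ∈ B, i < b) :
    (NN Av A (insert i B) R).card =
      ∑ o ∈ A.filter (fun o => o < i ∧ ∀ y ∈ A, ¬ R o y),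
        (NN Av (A.erase o) B (fun x y => R x y ∨ New i o x y)).card := by
  have hi : i ∉ B := fun h => lt_irrefl _ (hB i h)
  have key : NN Av A (insert i B) R =
      (A.filter (fun o => o < i ∧ ∀ y ∈ A, ¬ R o y)).biUnion fun o =>
        (NN Av (A.erase o) B (fun x y => R x y ∨ New i o x y)).image (insert (o, i)) := by
    have hor : ∀ (o : ℕ) C, Cons (fun x y => R x y ∨ New i o x y) C ↔
        Cons R C ∧ Cons (New i o) C := by
      intro o C
      refine ⟨fun h => ⟨fun x y x' y' hR => h x y x' y' (Or.inl hR),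
        fun x y x' y' hR => h x y x' y' (Or.inr hR)⟩, ?_⟩
      rintro ⟨h1, h2⟩ x y x' y' (hR | hR)
      · exact h1 x y x' y' hR
      · exact h2 x y x' y' hR
    ext C
    simp only [Finset.mem_biUnion, Finset.mem_filter, Finset.mem_image, mem_NN, hor]
    constructor
    · rintro ⟨h1, h2, h3⟩
      obtain ⟨o, ho⟩ := h1.ex2 (Finset.mem_insert_self i B)
      have he := h1.ers ho hi
      have hC : insert (o, i) (C.erase (o, i)) = C := Finset.insert_erase ho
      rw [← hC, cons_insert he (h1.mem1 ho) hB] at h3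
      rw [← hC, hAv A B o i _ he (h1.lt _ ho) hB] at h2
      exact ⟨o, ⟨h1.mem1 ho, h1.lt _ ho, h3.1⟩, _, ⟨he, h2.1, h3.2, h2.2⟩, hC⟩
    · rintro ⟨o, ⟨h1, h2, h3⟩, C', ⟨h4, h5, h6, h7⟩, rfl⟩
      exact ⟨h4.ins h1 hi h2, (hAv A B o i _ h4 h2 hB).2 ⟨h5, h7⟩,
        (cons_insert h4 h1 hB).2 ⟨h3, h6⟩⟩
  rw [key, Finset.card_biUnion]
  · refine Finset.sum_congr rfl fun o ho => ?_
    apply Finset.card_image_of_injOn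
    intro C1 h1 C2 h2 e
    have n1 : (o, i) ∉ C1 := fun h => hi ((mem_NN.1 h1).1.mem2 h)
    have n2 : (o, i) ∉ C2 := fun h => hi ((mem_NN.1 h2).1.mem2 h)
    rw [← Finset.erase_insert n1, ← Finset.erase_insert n2]
    exact congrArg (fun C => C.erase (o, i)) e
  · intro o _ o' _ hne
    rw [Function.onFun, Finset.disjoint_left]
    intro C h1 h2
    obtain ⟨C1, hC1, rfl⟩ := Finset.mem_image.1 h1
    obtain ⟨C2, hC2, e⟩ := Finset.mem_image.1 h2
    have : (o, i) ∈ insert (o', i) C2 := by rw [e]; exact Finset.mem_insert_self _ _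
    rcases Finset.mem_insert.1 this with e | e
    · exact hne (congrArg Prod.fst e)
    · exact hi ((mem_NN.1 hC2).1.mem2 e)

theorem NN_congr {Av : Finset (ℕ × ℕ) → Prop} {A B : Finset ℕ} {R R' : ℕ → ℕ → Prop}
    (h : ∀ x ∈ A, ∀ y ∈ A, R x y ↔ R' x y) : NN Av A B R = NN Av A B R' := by
  ext C
  rw [mem_NN, mem_NN]
  refine and_congr_right fun h1 => and_congr_right fun _ => ?_
  constructor
  · intro hc x y x' y' hR hx hy
    exact hc x y x' y' ((h x (h1.mem1 hx) y (h1.mem1 hy)).2 hR) hx hy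
  · intro hc x y x' y' hR hx hy
    exact hc x y x' y' ((h x (h1.mem1 hx) y (h1.mem1 hy)).1 hR) hx hy

def pos (b : Bool) : ℕ → List Bool → Finset ℕ
  | _, [] => ∅
  | i, c :: w => if c = b then insert i (pos b (i + 1) w) else pos b (i + 1) w

theorem mem_pos (b : Bool) (w : List Bool) (i x : ℕ) :
    x ∈ pos b i w ↔ i ≤ x ∧ w[x - i]? = some b := by
  induction w generalizing i with
  | nil => simp [pos]
  | cons c w ih =>
    have hx : x ∈ pos b i (c :: w) ↔ (c = b ∧ x = i) ∨ x ∈ pos b (i + 1) w := by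
      rw [pos]; split_ifs with h <;> simp [h]
    rw [hx, ih]
    rcases lt_trichotomy x i with h | h | h
    · constructor
      · rintro (h' | h') <;> omega
      · intro h'; omega
    · subst h; simp
    · obtain ⟨d, rfl⟩ : ∃ d, x = i + 1 + d := ⟨x - (i+1), by omega⟩
      have e1 : i + 1 + d - (i + 1) = d := by omega
      have e2 : i + 1 + d - i = d + 1 := by omega
      rw [e1, e2, List.getElem?_cons_succ]
      constructor
      · rintro (h' | h')
        · omega
        · exact ⟨by omega, h'.2⟩
      · intro h'; exact Or.inr ⟨by omega, h'.2⟩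

open Classical in
theorem card_false {Av : Finset (ℕ × ℕ) → Prop} {New : ℕ → ℕ → ℕ → ℕ → Prop}
    (hAv : AvStep Av New) (O : Finset ℕ) (w : List Bool) (i : ℕ) (R : ℕ → ℕ → Prop)
    (hO : ∀ o ∈ O, o < i) (hR : ∀ x y, R x y → y < i) :
    (NN Av (O ∪ pos true i (false :: w)) (pos false i (false :: w)) R).card =
      ∑ o ∈ O.filter (fun o => ∀ y ∈ O, ¬ R o y),
        (NN Av (O.erase o ∪ pos true (i + 1) w) (pos false (i + 1) w)
          (fun x y => R x y ∨ New i o x y)).card := by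
  have e1 : pos true i (false :: w) = pos true (i + 1) w := by simp [pos]
  have e2 : pos false i (false :: w) = insert i (pos false (i + 1) w) := by simp [pos]
  have hp : ∀ b, ∀ x ∈ pos b (i + 1) w, i < x := fun b x hx => by
    have := ((mem_pos _ _ _ _).1 hx).1; omega
  rw [e1, e2, card_step hAv _ _ i R (hp _)]
  have e3 : (O ∪ pos true (i + 1) w).filter
      (fun o => o < i ∧ ∀ y ∈ O ∪ pos true (i + 1) w, ¬ R o y) =
      O.filter (fun o => ∀ y ∈ O, ¬ R o y) := by
    ext x
    simp only [Finset.mem_filter, Finset.mem_union]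
    constructor
    · rintro ⟨h1 | h1, h2, h3⟩
      · exact ⟨h1, fun y hy => h3 y (Or.inl hy)⟩
      · have := hp _ _ h1; omega
    · rintro ⟨h1, h2⟩
      refine ⟨Or.inl h1, hO _ h1, ?_⟩
      rintro y (hy | hy) hr
      · exact h2 y hy hr
      · have := hp _ _ hy; have := hR _ _ hr; omega
  refine Finset.sum_congr (by convert e3) fun o ho => ?_
  have ho' := hO o (Finset.mem_filter.1 ho).1
  rw [Finset.erase_union_distrib, Finset.erase_eq_of_notMem (s := pos true (i + 1) w)]
  intro h; have := hp _ _ h; omega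

theorem card_nil {Av : Finset (ℕ × ℕ) → Prop} (hAv : Av ∅) (O : Finset ℕ) (i : ℕ)
    (R : ℕ → ℕ → Prop) :
    (NN Av (O ∪ pos true i []) (pos false i []) R).card = if O.card = 0 then 1 else 0 := by
  have e : ∀ b, pos b i [] = ∅ := fun b => rfl
  rw [e, e, Finset.union_empty]
  split_ifs with h
  · rw [Finset.card_eq_zero] at h
    subst h
    rw [Finset.card_eq_one]
    refine ⟨∅, ?_⟩
    ext C
    rw [mem_NN, Finset.mem_singleton]
    constructor
    · rintro ⟨h, -⟩
      exact Finset.image_eq_empty.1 h.fst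
    · rintro rfl
      exact ⟨⟨rfl, rfl, by simp, by simp, by simp⟩, hAv, by intro x y x' y' _ h; simp at h⟩
  · rw [Finset.card_eq_zero, Finset.eq_empty_iff_forall_notMem]
    intro C hC
    have h1 := (mem_NN.1 hC).1
    apply h
    rw [← h1.fst, Finset.image_eq_empty.1 h1.snd]; rfl

theorem set_true (O : Finset ℕ) (w : List Bool) (i : ℕ) :
    O ∪ pos true i (true :: w) = insert i O ∪ pos true (i + 1) w ∧
      pos false i (true :: w) = pos false (i + 1) w := by
  simp [pos]

open Polynomial in
noncomputable def LL : ℕ → List Bool → ℤ[X] →ₗ[ℤ] ℤ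
  | h, [] => if h = 0 then lcoeff ℤ 0 else 0
  | h, true :: w => (LL (h + 1) w).comp (LinearMap.mulLeft ℤ X)
  | h, false :: w => (LL (h - 1) w).comp
      (LinearMap.mulLeft ℤ X - (lcoeff ℤ h).smulRight (Chebyshev.S ℤ ((h : ℤ) + 1)))

open Polynomial in
theorem LL_false (h : ℕ) (w : List Bool) (p : ℤ[X]) (hp : p.Monic) (hd : p.natDegree = h) :
    LL h (false :: w) p = LL (h - 1) w (X * p - Chebyshev.S ℤ ((h : ℤ) + 1)) := by
  have : p.coeff h = 1 := by rw [← hd]; exact hp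
  simp [LL, this]

open Polynomial in
theorem main2 (w : List Bool) : ∀ (i : ℕ) (O : Finset ℕ) (m : ℕ), (∀ o ∈ O, o < i) → m ≤ i →
    ((NN Av2 (O ∪ pos true i w) (pos false i w) (fun x y => x < y ∧ y < m)).card : ℤ) =
      LL O.card w (X ^ (O.card - (O.filter (· < m)).card) *
        Chebyshev.S ℤ ((O.filter (· < m)).card : ℤ)) := by
  induction w with
  | nil =>
    intro i O m hO hm
    rw [card_nil (by intro a b c a' b' c' h; simp at h)]
    by_cases h : O.card = 0
    · have h' := Finset.card_eq_zero.1 h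
      subst h'; simp [LL]
    · simp [LL, h]
  | cons c w ih =>
    intro i O m hO hm
    have hs : (O.filter (· < m)).card ≤ O.card := Finset.card_filter_le _ _
    cases c with
    | true =>
      have hn : i ∉ O := fun h => lt_irrefl _ (hO i h)
      rw [(set_true O w i).1, (set_true O w i).2, ih (i + 1) (insert i O) m
        (by intro o ho; rcases Finset.mem_insert.1 ho with rfl | ho; omega; have := hO o ho; omega)
        (by omega), Finset.filter_insert, if_neg (by omega), Finset.card_insert_of_notMem hn]
      simp only [LL, LinearMap.comp_apply, LinearMap.mulLeft_apply]
      rw [← mul_assoc, ← pow_succ', Nat.succ_sub hs]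
    | false =>
      have hM := chebMonic (O.filter (· < m)).card
      rw [LL_false _ _ _ ((monic_X_pow _).mul hM.1)
        (by rw [(monic_X_pow _).natDegree_mul hM.1, hM.2, natDegree_X_pow]; omega),
        ← telescope2 _ _ hs, ← sum_rank, map_sum,
        card_false avStep2 O w i _ hO (by intro x y h; omega)]
      push_cast
      rw [Finset.sum_filter]
      refine Finset.sum_congr rfl fun o ho => ?_
      have hcond : (∀ y ∈ O, ¬ (o < y ∧ y < m)) ↔
          (O.filter (· < m)).card ≤ (O.filter (· < o)).card + 1 := by
        constructor
        · intro h
          have : O.filter (· < m) ⊆ insert o (O.filter (· < o)) := by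
            intro x hx
            simp only [Finset.mem_filter, Finset.mem_insert] at hx ⊢
            have := h x hx.1
            by_cases hxo : x = o
            · exact Or.inl hxo
            · exact Or.inr ⟨hx.1, by omega⟩
          exact (Finset.card_le_card this).trans (Finset.card_insert_le _ _)
        · intro h y hy hlt
          have : insert y (insert o (O.filter (· < o))) ⊆ O.filter (· < m) := by
            intro x hx
            simp only [Finset.mem_filter, Finset.mem_insert] at hx ⊢
            rcases hx with rfl | rfl | hx
            · exact ⟨hy, hlt.2⟩
            · exact ⟨ho, by omega⟩
            · exact ⟨hx.1, by omega⟩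
          have h2 := Finset.card_le_card this
          rw [Finset.card_insert_of_notMem, Finset.card_insert_of_notMem] at h2
          · omega
          · simp
          · simp only [Finset.mem_filter, Finset.mem_insert]; omega
      by_cases hc : ∀ y ∈ O, ¬ (o < y ∧ y < m)
      · rw [if_pos hc, if_pos (hcond.1 hc)]
        have hoi := hO o ho
        rw [NN_congr (R' := fun x y => x < y ∧ y < o), ih (i + 1) (O.erase o) o
          (by intro x hx; have := hO x (Finset.mem_of_mem_erase hx); omega) (by omega),
          Finset.card_erase_of_mem ho]
        · have : (O.erase o).filter (· < o) = O.filter (· < o) := by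
            ext x; simp only [Finset.mem_filter, Finset.mem_erase]
            constructor
            · intro h; exact ⟨h.1.2, h.2⟩
            · intro h; exact ⟨⟨by omega, h.1⟩, h.2⟩
          rw [this]
        · intro x hx y hy
          simp only [Finset.mem_union, Finset.mem_erase, mem_pos] at hx hy
          constructor
          · rintro (h | h)
            · refine ⟨h.1, ?_⟩
              rcases hy with hy | hy
              · have := hc y hy.2; omega
              · omega
            · exact h
          · exact Or.inr
      · rw [if_neg hc, if_neg (fun h => hc (hcond.2 h)), map_zero]

open Polynomial in
noncomputable def PP (i : ℕ) (O : Finset ℕ) (f : ℕ → ℕ) : ℤ[X] :=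
  ∏ k ∈ Finset.range i, Chebyshev.S ℤ ((O.filter (fun x => f x = k)).card : ℤ)

theorem PP_true (i : ℕ) (O : Finset ℕ) (f : ℕ → ℕ) (hO : ∀ o ∈ O, o < i)
    (hf : ∀ o ∈ O, f o < i) :
    PP (i + 1) (insert i O) (Function.update f i i) = Polynomial.X * PP i O f := by
  have hn : i ∉ O := fun h => lt_irrefl _ (hO i h)
  have hu : ∀ x ∈ O, Function.update f i i x = f x := fun x hx =>
    Function.update_of_ne (by have := hO x hx; omega) _ _
  unfold PP
  rw [Finset.prod_range_succ, mul_comm]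
  congr 1
  · have : (insert i O).filter (fun x => Function.update f i i x = i) = {i} := by
      ext x
      simp only [Finset.mem_filter, Finset.mem_insert, Finset.mem_singleton]
      constructor
      · rintro ⟨rfl | h1, h2⟩
        · rfl
        · rw [hu x h1] at h2; have := hf x h1; omega
      · rintro rfl; simp
    rw [this]; simp
  · refine Finset.prod_congr rfl fun k hk => ?_
    have hk := Finset.mem_range.1 hk
    congr 3
    ext x
    simp only [Finset.mem_filter, Finset.mem_insert]
    constructor
    · rintro ⟨rfl | h1, h2⟩
      · simp at h2; omega
      · rw [hu x h1] at h2; exact ⟨h1, h2⟩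
    · rintro ⟨h1, h2⟩
      exact ⟨Or.inr h1, by rw [hu x h1]; exact h2⟩

open Polynomial in
theorem PP_false (i : ℕ) (O : Finset ℕ) (f : ℕ → ℕ)
    (hf : ∀ o ∈ O, f o < i) (hm : ∀ x ∈ O, ∀ y ∈ O, x ≤ y → f x ≤ f y)
    (o : ℕ) (ho : o ∈ O) (ht : ∀ y ∈ O, o < y → f o < f y) :
    PP (i + 1) (O.erase o) (fun x => if o < x then f o + 1 else f x) =
      (∏ j ∈ Finset.range (f o), Chebyshev.S ℤ ((O.filter (fun x => f x = j)).card : ℤ)) *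
      (Chebyshev.S ℤ (((O.filter (fun x => f x = f o)).card : ℤ) - 1) *
        Chebyshev.S ℤ ((∑ j ∈ Finset.Ico (f o + 1) i,
          (O.filter (fun x => f x = j)).card : ℕ) : ℤ)) := by
  have hk := hf o ho
  unfold PP
  rw [← Finset.prod_range_mul_prod_Ico _ (show f o ≤ i + 1 by omega),
    Finset.prod_eq_prod_Ico_succ_bot (show f o < i + 1 by omega),
    Finset.prod_eq_prod_Ico_succ_bot (show f o + 1 < i + 1 by omega)]
  have h1 : ∏ k ∈ Finset.Ico (f o + 1 + 1) (i + 1), Chebyshev.S ℤ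
      (((O.erase o).filter (fun x => (if o < x then f o + 1 else f x) = k)).card : ℤ) = 1 := by
    refine Finset.prod_eq_one fun k hk => ?_
    have hk := Finset.mem_Ico.1 hk
    rw [Finset.filter_false_of_mem]
    · simp
    · intro x hx
      have := hm x (Finset.mem_of_mem_erase hx) o ho
      split_ifs
      · omega
      · have := this (by omega); omega
  rw [h1, mul_one]
  congr 1
  · refine Finset.prod_congr rfl fun k hk => ?_
    have hk := Finset.mem_range.1 hk
    congr 3
    ext x
    simp only [Finset.mem_filter, Finset.mem_erase]
    constructor
    · rintro ⟨⟨h1, h2⟩, h3⟩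
      split_ifs at h3 <;> first | omega | exact ⟨h2, h3⟩
    · rintro ⟨h2, h3⟩
      have hxo : x < o := by
        by_contra h
        have := hm o ho x h2 (by omega); omega
      rw [if_neg (by omega)]
      exact ⟨⟨by omega, h2⟩, h3⟩
  congr 1
  · have : (O.erase o).filter (fun x => (if o < x then f o + 1 else f x) = f o) =
        (O.filter (fun x => f x = f o)).erase o := by
      ext x
      simp only [Finset.mem_filter, Finset.mem_erase]
      constructor
      · rintro ⟨⟨h1, h2⟩, h3⟩
        split_ifs at h3
        · omega
        · exact ⟨h1, h2, h3⟩
      · rintro ⟨h1, h2, h3⟩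
        have : ¬ o < x := fun h => by have := ht x h2 h; omega
        rw [if_neg this]
        exact ⟨⟨h1, h2⟩, h3⟩
    have hmem : o ∈ O.filter (fun x => f x = f o) := Finset.mem_filter.2 ⟨ho, rfl⟩
    rw [this, Finset.card_erase_of_mem hmem, Nat.cast_sub (Finset.card_pos.2 ⟨o, hmem⟩)]
    simp
  · congr 2
    rw [Finset.card_eq_sum_card_fiberwise (f := f) (t := Finset.Ico (f o + 1) i)]
    · refine Finset.sum_congr rfl fun j hj => ?_
      have hj := Finset.mem_Ico.1 hj
      congr 1
      ext x
      simp only [Finset.mem_filter, Finset.mem_erase]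
      constructor
      · rintro ⟨⟨⟨h1, h2⟩, h3⟩, h4⟩
        exact ⟨h2, h4⟩
      · rintro ⟨h2, h4⟩
        have hxo : o < x := by
          by_contra h
          have := hm x h2 o ho (by omega); omega
        rw [if_pos hxo]
        exact ⟨⟨⟨by omega, h2⟩, rfl⟩, h4⟩
    · intro x hx
      simp only [Finset.coe_filter, Finset.mem_erase, Set.mem_ofPred_eq] at hx
      obtain ⟨⟨h1, h2⟩, h3⟩ := hx
      simp only [Finset.coe_Ico, Set.mem_Ico]
      have := hf x h2
      split_ifs at h3 with h
      · have := ht x h2 h; omega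
      · have := hm x h2 o ho (by omega); omega

open Polynomial in
theorem PP_monic (i : ℕ) (O : Finset ℕ) (f : ℕ → ℕ) (hf : ∀ o ∈ O, f o < i) :
    (PP i O f).Monic ∧ (PP i O f).natDegree = O.card := by
  unfold PP
  refine ⟨monic_prod_of_monic _ _ fun k _ => (chebMonic _).1, ?_⟩
  rw [natDegree_prod_of_monic _ _ fun k _ => (chebMonic _).1]
  simp only [(chebMonic _).2]
  rw [Finset.card_eq_sum_card_fiberwise (f := f) (t := Finset.range i)]
  intro x hx
  simpa using hf x hx

open Polynomial in
theorem main3 (w : List Bool) : ∀ (i : ℕ) (O : Finset ℕ) (f : ℕ → ℕ), (∀ o ∈ O, o < i) →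
    (∀ o ∈ O, f o < i) → (∀ x ∈ O, ∀ y ∈ O, x ≤ y → f x ≤ f y) →
    ((NN Av3 (O ∪ pos true i w) (pos false i w) (fun x y => x < y ∧ y < i ∧ f x = f y)).card : ℤ) =
      LL O.card w (PP i O f) := by
  classical
  induction w with
  | nil =>
    intro i O f hO hf hm
    rw [card_nil (by intro a b c a' b' c' h; simp at h)]
    by_cases h : O.card = 0
    · have h' := Finset.card_eq_zero.1 h
      subst h'; simp [LL, PP]
    · simp [LL, h]
  | cons c w ih =>
    intro i O f hO hf hm
    cases c with
    | true =>
      have hn : i ∉ O := fun h => lt_irrefl _ (hO i h)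
      have hu : ∀ x ∈ O, Function.update f i i x = f x := fun x hx =>
        Function.update_of_ne (by have := hO x hx; omega) _ _
      have hui : Function.update f i i i = i := Function.update_self _ _ _
      rw [(set_true O w i).1, (set_true O w i).2,
        NN_congr (R' := fun x y => x < y ∧ y < i + 1 ∧
          Function.update f i i x = Function.update f i i y),
        ih (i + 1) (insert i O) (Function.update f i i), PP_true i O f hO hf,
        Finset.card_insert_of_notMem hn]
      · simp only [LL, LinearMap.comp_apply, LinearMap.mulLeft_apply]
      · intro o ho
        rcases Finset.mem_insert.1 ho with rfl | ho
        · omega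
        · have := hO o ho; omega
      · intro o ho
        rcases Finset.mem_insert.1 ho with rfl | ho
        · omega
        · rw [hu o ho]; have := hf o ho; omega
      · intro x hx y hy hxy
        rcases Finset.mem_insert.1 hx with e | hx1 <;> rcases Finset.mem_insert.1 hy with e' | hy1
        · rw [e, e']
        · have := hO y hy1; omega
        · rw [e', hui, hu x hx1]; exact (hf x hx1).le
        · rw [hu x hx1, hu y hy1]; exact hm x hx1 y hy1 hxy
      · intro x hx y hy
        simp only [Finset.mem_union, Finset.mem_insert, mem_pos] at hx hy
        constructor
        · rintro ⟨h1, h2, h3⟩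
          rw [Function.update_of_ne (by omega), Function.update_of_ne (by omega)]
          exact ⟨h1, by omega, h3⟩
        · rintro ⟨h1, h2, h3⟩
          have hxO : x ∈ O := by
            rcases hx with (h | h) | h
            · omega
            · exact h
            · omega
          rw [hu x hxO] at h3
          by_cases hyi : y = i
          · subst hyi; rw [hui] at h3; have := hf x hxO; omega
          · rw [Function.update_of_ne hyi] at h3
            exact ⟨h1, by omega, h3⟩
    | false =>
      have hM := PP_monic i O f hf
      have hcard : O.card = ∑ j ∈ Finset.range i, (O.filter (fun x => f x = j)).card := by
        rw [Finset.card_eq_sum_card_fiberwise (f := f) (t := Finset.range i)]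
        intro x hx
        simpa using hf x hx
      have htel := telescope (fun j => (O.filter (fun x => f x = j)).card) i
      rw [← hcard] at htel
      rw [LL_false _ _ _ hM.1 hM.2, PP, ← htel,
        card_false avStep3 O w i _ hO (by intro x y h; exact h.2.1)]
      set tops := O.filter (fun o => ∀ y ∈ O, ¬ (o < y ∧ y < i ∧ f o = f y)) with htops
      have ht : ∀ o ∈ tops, ∀ y ∈ O, o < y → f o < f y := by
        intro o ho y hy hlt
        have h1 := (Finset.mem_filter.1 ho).2 y hy
        have h2 := hm o (Finset.mem_filter.1 ho).1 y hy hlt.le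
        have := hO y hy
        by_contra h
        exact h1 ⟨hlt, this, by omega⟩
      have htO : ∀ o ∈ tops, o ∈ O := fun o ho => (Finset.mem_filter.1 ho).1
      have hinj : Set.InjOn f tops := by
        intro x hx y hy e
        rcases lt_trichotomy x y with h | h | h
        · have := ht x hx y (htO y hy) h; omega
        · exact h
        · have := ht y hy x (htO x hx) h; omega
      rw [← Finset.sum_subset (s₁ := tops.image f) (s₂ := Finset.range i)]
      · rw [Finset.sum_image hinj, map_sum, Nat.cast_sum]
        refine Finset.sum_congr (by rw [htops]; congr) fun o ho => ?_
        rw [← PP_false i O f hf hm o (htO o ho) (ht o ho)]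
        rw [NN_congr (R' := fun x y => x < y ∧ y < i + 1 ∧
          (if o < x then f o + 1 else f x) = (if o < y then f o + 1 else f y)),
          ih (i + 1) (O.erase o) (fun x => if o < x then f o + 1 else f x),
          Finset.card_erase_of_mem (htO o ho)]
        · intro x hx; have := hO x (Finset.mem_of_mem_erase hx); omega
        · intro x hx
          have h1 := hf x (Finset.mem_of_mem_erase hx)
          have h2 := hf o (htO o ho)
          split_ifs <;> omega
        · intro x hx y hy hxy
          have hx := Finset.mem_of_mem_erase hx
          have hy := Finset.mem_of_mem_erase hy
          have h1 := hm x hx y hy hxy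
          have h2 := hm x hx o (htO o ho)
          split_ifs <;> omega
        · intro x hx y hy
          simp only [Finset.mem_union, Finset.mem_erase, mem_pos] at hx hy
          by_cases hlt : x < y ∧ y < i
          · replace hx : x ≠ o ∧ x ∈ O := by
              rcases hx with h | h
              · exact h
              · omega
            replace hy : y ≠ o ∧ y ∈ O := by
              rcases hy with h | h
              · exact h
              · omega
            have h1 := ht o ho y hy.2
            have h2 := hm x hx.2 o (htO o ho)
            have h3 := hO o (htO o ho)
            obtain ⟨l1, l2⟩ := hlt
            split_ifs <;> omega
          · have : ¬ (x < y ∧ y < i + 1) := by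
              rcases hy with h | h
              · have := hO y h.2; omega
              · omega
            constructor
            · rintro (h | h) <;> omega
            · intro h; omega
      · intro k hk
        obtain ⟨o, ho, rfl⟩ := Finset.mem_image.1 hk
        exact Finset.mem_range.2 (hf o (htO o ho))
      · intro k hk hk'
        have : O.filter (fun x => f x = k) = ∅ := by
          by_contra hne
          have hne := Finset.nonempty_iff_ne_empty.2 hne
          have hmax := Finset.max'_mem _ hne
          set o := (O.filter (fun x => f x = k)).max' hne with ho
          have hmax := Finset.mem_filter.1 hmax
          apply hk'
          refine Finset.mem_image.2 ⟨o, Finset.mem_filter.2 ⟨hmax.1, ?_⟩, hmax.2⟩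
          rintro y hy ⟨h1, h2, h3⟩
          have := Finset.le_max' (O.filter (fun x => f x = k)) y
            (Finset.mem_filter.2 ⟨hy, by omega⟩)
          omega
        simp [this]

theorem card_eq (t : List Bool) :
    (NN Av3 (pos true 1 t) (pos false 1 t) (fun _ _ => False)).card =
    (NN Av2 (pos true 1 t) (pos false 1 t) (fun _ _ => False)).card := by
  have h3 := main3 t 1 ∅ (fun _ => 0) (by simp) (by simp) (by simp)
  have h2 := main2 t 1 ∅ 0 (by simp) (by simp)
  rw [Finset.empty_union] at h2 h3
  have e3 : NN Av3 (pos true 1 t) (pos false 1 t) (fun x y => x < y ∧ y < 1 ∧ 0 = 0) =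
    NN Av3 (pos true 1 t) (pos false 1 t) (fun _ _ => False) := NN_congr (by
      intro x hx y hy; constructor
      · intro h; omega
      · intro h; exact h.elim)
  have e2 : NN Av2 (pos true 1 t) (pos false 1 t) (fun x y => x < y ∧ y < 0) =
    NN Av2 (pos true 1 t) (pos false 1 t) (fun _ _ => False) := NN_congr (by
      intro x hx y hy; constructor
      · intro h; omega
      · intro h; exact h.elim)
  rw [e3] at h3
  rw [e2] at h2
  have : PP 1 ∅ (fun _ => 0) = 1 := by simp [PP]
  rw [this] at h3
  simp only [Finset.filter_empty, Finset.card_empty, Nat.cast_zero, Polynomial.Chebyshev.S_zero,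
    mul_one, Nat.sub_zero, pow_zero] at h2 h3
  exact_mod_cast h3.trans h2.symm

theorem isM_iff (n : ℕ) (t : List Bool) (ht : t.length = 2 * n) (M : Finset (ℕ × ℕ)) :
    IsPerfectMatching n M ∧ shapeOf n M = t ↔ IsM (pos true 1 t) (pos false 1 t) M := by
  have hshape : shapeOf n M = t ↔ ∀ x, 1 ≤ x → x ≤ 2 * n →
      t[x - 1]? = some (decide (x ∈ M.image Prod.fst)) := by
    constructor
    · rintro rfl x h1 h2
      have : x - 1 + 1 = x := by omega
      simp only [shapeOf, List.getElem?_map]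
      rw [List.getElem?_range (by omega)]
      simp [this]
    · intro h
      apply List.ext_getElem?
      intro k
      by_cases hk : k < 2 * n
      · have := h (k + 1) (by omega) (by omega)
        rw [Nat.add_sub_cancel] at this
        rw [this]
        simp only [shapeOf, List.getElem?_map]
        rw [List.getElem?_range hk]
        rfl
      · rw [List.getElem?_eq_none (by simp [shapeOf]; omega), List.getElem?_eq_none (by omega)]
  have hpos : ∀ b x, x ∈ pos b 1 t → 1 ≤ x ∧ x ≤ 2 * n := by
    intro b x hx
    rw [mem_pos] at hx
    have := (List.getElem?_eq_some_iff.1 hx.2).1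
    omega
  rw [hshape]
  constructor
  · rintro ⟨⟨h1, h2⟩, h3⟩
    have hu : ∀ p ∈ M, ∀ q ∈ M, ∀ x, (p.1 = x ∨ p.2 = x) → (q.1 = x ∨ q.2 = x) → p = q := by
      intro p hp q hq x hpx hqx
      have := h1 p hp
      exact (h2 x (by omega) (by omega)).unique ⟨hp, hpx⟩ ⟨hq, hqx⟩
    refine ⟨?_, ?_, ?_, ?_, fun p hp => (h1 p hp).1⟩
    · ext x
      constructor
      · intro hx
        obtain ⟨p, hp, rfl⟩ := Finset.mem_image.1 hx
        have := h1 p hp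
        rw [mem_pos, h3 p.1 (by omega) (by omega)]
        exact ⟨by omega, by simpa using hx⟩
      · intro hx
        have hb := hpos _ _ hx
        rw [mem_pos, h3 x hb.1 hb.2] at hx
        have := hx.2
        rw [Option.some.injEq, decide_eq_true_eq] at this
        exact this
    · ext x
      constructor
      · intro hx
        obtain ⟨p, hp, rfl⟩ := Finset.mem_image.1 hx
        have h4 := h1 p hp
        rw [mem_pos, h3 p.2 (by omega) (by omega), Option.some.injEq, decide_eq_false_iff_not]
        refine ⟨by omega, fun h => ?_⟩
        obtain ⟨q, hq, e⟩ := Finset.mem_image.1 h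
        have := hu p hp q hq p.2 (Or.inr rfl) (Or.inl e)
        subst this; omega
      · intro hx
        have hb := hpos _ _ hx
        rw [mem_pos, h3 x hb.1 hb.2, Option.some.injEq, decide_eq_false_iff_not] at hx
        obtain ⟨p, ⟨hp, hpx⟩, -⟩ := h2 x hb.1 hb.2
        rcases hpx with e | e
        · exact absurd (Finset.mem_image.2 ⟨p, hp, e⟩) hx.2
        · exact Finset.mem_image.2 ⟨p, hp, e⟩
    · exact fun p hp q hq e => hu p hp q hq q.1 (Or.inl e) (Or.inl rfl)
    · exact fun p hp q hq e => hu p hp q hq q.2 (Or.inr e) (Or.inr rfl)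
  · intro h
    have hdisj : ∀ x, x ∈ pos true 1 t → x ∈ pos false 1 t → False := by
      intro x h1 h2
      rw [mem_pos] at h1 h2
      have := h1.2.symm.trans h2.2
      simp at this
    have hcov : ∀ x, 1 ≤ x → x ≤ 2 * n → x ∈ pos true 1 t ∨ x ∈ pos false 1 t := by
      intro x h1 h2
      have hl : x - 1 < t.length := by omega
      rw [mem_pos, mem_pos, List.getElem?_eq_getElem hl]
      cases t[x - 1] <;> simp [h1]
    have hm1 : ∀ p ∈ M, p.1 ∈ pos true 1 t := fun p hp => h.mem1 (y := p.2) hp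
    have hm2 : ∀ p ∈ M, p.2 ∈ pos false 1 t := fun p hp => h.mem2 (x := p.1) hp
    refine ⟨⟨fun p hp => ⟨h.lt p hp, (hpos _ _ (hm1 p hp)).1, (hpos _ _ (hm2 p hp)).2⟩, ?_⟩, ?_⟩
    · intro x h1 h2
      rcases hcov x h1 h2 with hx | hx
      · obtain ⟨y, hy⟩ := h.ex1 hx
        refine ⟨(x, y), ⟨hy, Or.inl rfl⟩, ?_⟩
        rintro q ⟨hq, e | e⟩
        · exact h.i1 _ hq _ hy e
        · exact (hdisj x hx (e ▸ hm2 q hq)).elim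
      · obtain ⟨y, hy⟩ := h.ex2 hx
        refine ⟨(y, x), ⟨hy, Or.inr rfl⟩, ?_⟩
        rintro q ⟨hq, e | e⟩
        · exact (hdisj x (e ▸ hm1 q hq) hx).elim
        · exact h.i2 _ hq _ hy e
    · intro x h1 h2
      rw [h.fst]
      rcases hcov x h1 h2 with hx | hx
      · rw [decide_eq_true hx]; exact ((mem_pos _ _ _ _).1 hx).2
      · rw [decide_eq_false (fun h' => hdisj x h' hx)]; exact ((mem_pos _ _ _ _).1 hx).2

theorem av3_iff (M : Finset (ℕ × ℕ)) : MatchAvoids p321 M ↔ Av3 M := by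
  unfold MatchAvoids MatchContains Av3
  constructor
  · intro h a b c a' b' c' ha hb hc l1 l2 l3 l4 l5
    apply h
    refine ⟨![a, b, c, a', b', c'], ?_, ?_⟩
    · rw [Fin.strictMono_iff_lt_succ]
      intro i
      fin_cases i <;> assumption
    · intro j
      fin_cases j <;> assumption
  · rintro h ⟨f, hf, hp⟩
    refine h _ _ _ _ _ _ (hp 0) (hp 1) (hp 2) ?_ ?_ ?_ ?_ ?_ <;> apply hf <;> decide

theorem av2_iff (M : Finset (ℕ × ℕ)) : MatchAvoids p213 M ↔ Av2 M := by
  unfold MatchAvoids MatchContains Av2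
  constructor
  · intro h a b c a' b' c' ha hb hc l1 l2 l3 l4 l5
    apply h
    refine ⟨![a, b, c, c', a', b'], ?_, ?_⟩
    · rw [Fin.strictMono_iff_lt_succ]
      intro i
      fin_cases i <;> assumption
    · intro j
      fin_cases j <;> assumption
  · rintro h ⟨f, hf, hp⟩
    refine h _ _ _ _ _ _ (hp 0) (hp 1) (hp 2) ?_ ?_ ?_ ?_ ?_ <;> apply hf <;> decide

theorem set_eq {τ : Equiv.Perm (Fin 3)} {Av : Finset (ℕ × ℕ) → Prop}
    (hAv : ∀ M, MatchAvoids τ M ↔ Av M) (n : ℕ) (t : List Bool) (ht : t.length = 2 * n) :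
    {M : Finset (ℕ × ℕ) | IsPerfectMatching n M ∧ MatchAvoids τ M ∧ shapeOf n M = t} =
      ↑(NN Av (pos true 1 t) (pos false 1 t) (fun _ _ => False)) := by
  ext M
  rw [Finset.mem_coe, mem_NN, ← isM_iff n t ht, ← hAv, Set.mem_ofPred_eq]
  have : Cons (fun _ _ => False) M := by intro x y x' y' h; exact h.elim
  tauto

theorem shape_count (n : ℕ) (t : List Bool) :
    {M : Finset (ℕ × ℕ) | IsPerfectMatching n M ∧ MatchAvoids p321 M ∧ shapeOf n M = t}.ncard =
    {M : Finset (ℕ × ℕ) | IsPerfectMatching n M ∧ MatchAvoids p213 M ∧ shapeOf n M = t}.ncard := by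
  by_cases ht : t.length = 2 * n
  · rw [set_eq av3_iff n t ht, set_eq av2_iff n t ht, Set.ncard_coe_finset, Set.ncard_coe_finset,
      card_eq]
  · have hs : ∀ M, shapeOf n M ≠ t := by
      rintro M rfl; exact ht (by simp [shapeOf])
    simp [hs]

open Classical in
theorem mcount_eq (τ : Equiv.Perm (Fin 3)) (n : ℕ) (T : Finset (Finset (ℕ × ℕ)))
    (hT : ∀ M, IsPerfectMatching n M → M ∈ T) :
    mcount τ n = ∑ t ∈ T.image (shapeOf n),
      {M : Finset (ℕ × ℕ) | IsPerfectMatching n M ∧ MatchAvoids τ M ∧ shapeOf n M = t}.ncard := by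
  have h1 : {M : Finset (ℕ × ℕ) | IsPerfectMatching n M ∧ MatchAvoids τ M} =
      ↑(T.filter fun M => IsPerfectMatching n M ∧ MatchAvoids τ M) := by
    ext M
    simp only [Set.mem_ofPred_eq, Finset.coe_filter]
    exact ⟨fun h => ⟨hT M h.1, h⟩, fun h => h.2⟩
  unfold mcount
  rw [h1, Set.ncard_coe_finset,
    Finset.card_eq_sum_card_fiberwise (f := shapeOf n) (t := T.image (shapeOf n))]
  · refine Finset.sum_congr rfl fun t _ => ?_
    rw [← Set.ncard_coe_finset]
    congr 1
    ext M
    simp only [Set.mem_ofPred_eq, Finset.coe_filter, Finset.mem_filter]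
    exact ⟨fun h => ⟨h.1.2.1, h.1.2.2, h.2⟩, fun h => ⟨⟨hT M h.1, h.1, h.2.1⟩, h.2.2⟩⟩
  · intro M hM
    exact Finset.mem_coe.2 (Finset.mem_image_of_mem _ (Finset.mem_filter.1 hM).1)

/-- The patterns `321` and `213` are shape-Wilf-equivalent, and consequently
`|M_n(321)| = |M_n(213)|` for all `n`. -/
theorem shapeWilfEquivalent_321_213 :
    (∀ n : ℕ, 0 < n → ∀ t : List Bool, IsDyckPath n t →
      {M : Finset (ℕ × ℕ) |
          IsPerfectMatching n M ∧ MatchAvoids p321 M ∧ shapeOf n M = t}.ncard =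
      {M : Finset (ℕ × ℕ) |
          IsPerfectMatching n M ∧ MatchAvoids p213 M ∧ shapeOf n M = t}.ncard) ∧
    ∀ n : ℕ, mcount p321 n = mcount p213 n := by
  refine ⟨fun n _ t _ => shape_count n t, fun n => ?_⟩
  have hT : ∀ M, IsPerfectMatching n M →
      M ∈ (Finset.range (2 * n + 1) ×ˢ Finset.range (2 * n + 1)).powerset := by
    intro M hM
    rw [Finset.mem_powerset]
    intro p hp
    have := hM.1 p hp
    rw [Finset.mem_product, Finset.mem_range, Finset.mem_range]
    omega
  rw [mcount_eq p321 n _ hT, mcount_eq p213 n _ hT]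
  exact Finset.sum_congr rfl fun t _ => shape_count n t
end
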